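/- arXiv:1401.2073 — 2 statements merged into one kernel-verified Lean document; each statement's English description precedes it below -/
import Mathlib

section
/- Regard all quantities as functions of t = k² ∈ (0,1) and define H_n(t) := t(t−1)·(d/dt)·log D_n[w(·,t)]. Then for every integer n ≥ 1, H_n(t) = −t·(α+β+n−1/2)·p1(n) − t·(α+β+n+1/2)·p1(n+1) − n²·t/2, where p1(n) = p1(n)(t). -/
open MeasureTheory

/-- The Hankel determinant of the moments of `w(x,t) = (1-x²)^α (1-tx²)^β` on `[-1,1]`. -/
noncomputable def hankelW (α β t : ℝ) (n : ℕ) : ℝ :=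
  Matrix.det (Matrix.of fun i j : Fin n =>
    ∫ x in (-1:ℝ)..1, x ^ ((i:ℕ) + (j:ℕ)) * ((1 - x ^ 2) ^ α * (1 - t * x ^ 2) ^ β))

open Polynomial in
/-- `P` is a sequence of monic polynomials, `P n` of degree `n`, orthogonal for the linear
functional `L` with squared norms `h`. -/
structure IsMonicOrthogonal (L : ℝ[X] →ₗ[ℝ] ℝ) (P : ℕ → ℝ[X]) (h : ℕ → ℝ) : Prop where
  monic : ∀ n, (P n).Monic
  natDegree : ∀ n, (P n).natDegree = n
  pos : ∀ n, 0 < h n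
  ortho : ∀ m n, L (P m * P n) = if m = n then h n else 0

namespace IsMonicOrthogonal

open Polynomial

variable {L : ℝ[X] →ₗ[ℝ] ℝ} {P : ℕ → ℝ[X]} {h : ℕ → ℝ}

lemma coeff_self (H : IsMonicOrthogonal L P h) (n : ℕ) : (P n).coeff n = 1 := by
  have := (H.monic n).coeff_natDegree
  rwa [H.natDegree] at this

lemma coeff_of_lt (H : IsMonicOrthogonal L P h) {m n : ℕ} (hmn : n < m) : (P n).coeff m = 0 :=
  coeff_eq_zero_of_natDegree_lt (by rwa [H.natDegree])

lemma apply_mul_of_degree_lt (H : IsMonicOrthogonal L P h) {n : ℕ} {q : ℝ[X]}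
    (hq : q.degree < n) : L (q * P n) = 0 := by
  suffices ∀ m ≤ n, ∀ q : ℝ[X], q.degree < m → L (q * P n) = 0 from this n le_rfl q hq
  intro m
  induction m with
  | zero =>
    intro _ q hq
    have : q = 0 := by
      ext k
      simpa using (degree_lt_iff_coeff_zero q 0).1 hq k (Nat.zero_le _)
    simp [this]
  | succ m ih =>
    intro hm q hq
    have hr : (q - C (q.coeff m) * P m).degree < m := by
      rw [degree_lt_iff_coeff_zero] at hq ⊢
      intro k hk
      rcases hk.eq_or_lt with rfl | hk
      · simp [H.coeff_self]
      · simp [H.coeff_of_lt hk, hq k hk]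
    have hL := ih (by omega) _ hr
    rw [sub_mul, map_sub, mul_assoc, ← smul_eq_C_mul, map_smul, H.ortho, if_neg (by omega)] at hL
    simpa using hL

lemma apply_mul_of_degree_lt_succ (H : IsMonicOrthogonal L P h) {n : ℕ} {q : ℝ[X]}
    (hq : q.degree < (n + 1 : ℕ)) : L (q * P n) = q.coeff n * h n := by
  have hr : (q - C (q.coeff n) * P n).degree < n := by
    rw [degree_lt_iff_coeff_zero] at hq ⊢
    intro k hk
    rcases hk.eq_or_lt with rfl | hk
    · simp [H.coeff_self]
    · simp [H.coeff_of_lt hk, hq k hk]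
  have hL := H.apply_mul_of_degree_lt hr
  rw [sub_mul, map_sub, mul_assoc, ← smul_eq_C_mul, map_smul, H.ortho, if_pos rfl] at hL
  simpa [sub_eq_zero] using hL

lemma coeff_comp_neg_X (q : ℝ[X]) (n : ℕ) : (q.comp (-X)).coeff n = (-1) ^ n * q.coeff n := by
  have : (-X : ℝ[X]) = C (-1) * X := by simp
  rw [this, comp_C_mul_X_coeff, mul_comm]

/-- For an even functional, the subleading coefficients of the orthogonal polynomials vanish. -/
lemma coeff_pred (H : IsMonicOrthogonal L P h) (even : ∀ q, L (q.comp (-X)) = L q) (n : ℕ) :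
    (P (n + 1)).coeff n = 0 := by
  have hneg : L ((P (n + 1)).comp (-X) * P n) = 0 := by
    rw [← even, mul_comp, comp_assoc, mul_comm]
    simp only [neg_comp, X_comp, neg_neg, comp_X]
    refine H.apply_mul_of_degree_lt ((degree_lt_iff_coeff_zero _ _).2 fun k hk => ?_)
    rw [coeff_comp_neg_X, H.coeff_of_lt (by omega), mul_zero]
  have hdeg : ((P (n + 1)).comp (-X) - C ((-1) ^ (n + 1)) * P (n + 1)).degree
      < ((n + 1 : ℕ) : WithBot ℕ) := by
    refine (degree_lt_iff_coeff_zero _ _).2 fun k hk => ?_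
    rcases hk.eq_or_lt with rfl | hk
    · rw [coeff_sub, coeff_C_mul, coeff_comp_neg_X, sub_self]
    · rw [coeff_sub, coeff_C_mul, coeff_comp_neg_X, H.coeff_of_lt hk]
      simp
  have hL := H.apply_mul_of_degree_lt_succ hdeg
  rw [sub_mul, map_sub, hneg, mul_assoc, ← smul_eq_C_mul, map_smul, H.ortho,
    if_neg (by omega), coeff_sub, coeff_C_mul, coeff_comp_neg_X] at hL
  have hh := (H.pos n).ne'
  have h2 : ((-1 : ℝ) ^ n * 2 * h n) * (P (n + 1)).coeff n = 0 := by
    rw [pow_succ] at hL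
    simp only [smul_eq_mul, mul_zero, sub_zero] at hL
    linear_combination -hL
  rcases mul_eq_zero.1 h2 with h0 | h0
  · simp [hh] at h0
  · exact h0

/-- The coefficient of `x ^ (n - 2)` in `P n`, with value `0` for `n < 2`. -/
noncomputable def subcoeff (P : ℕ → ℝ[X]) (n : ℕ) : ℝ := (X ^ 2 * P n).coeff n

lemma apply_X_sq_mul (H : IsMonicOrthogonal L P h) (even : ∀ q, L (q.comp (-X)) = L q)
    {n : ℕ} {q : ℝ[X]} (hq : ∀ k, n < k + 2 → k ≠ n → q.coeff k = 0) :
    L (X ^ 2 * q * P n) = ((X ^ 2 * q).coeff n - q.coeff n * subcoeff P (n + 2)) * h n := by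
  have hdeg : (X ^ 2 * q - C (q.coeff n) * P (n + 2)).degree < ((n + 1 : ℕ) : WithBot ℕ) := by
    refine (degree_lt_iff_coeff_zero _ _).2 fun k hk => ?_
    rw [coeff_sub, coeff_C_mul, coeff_X_pow_mul']
    rcases hk.eq_or_lt with rfl | hk
    · rw [H.coeff_pred even]
      split_ifs
      · rw [hq _ (by omega) (by omega)]; simp
      · simp
    · obtain ⟨k, rfl⟩ : ∃ m, k = m + 2 := ⟨k - 2, by omega⟩
      rw [if_pos (by omega), Nat.add_sub_cancel]
      by_cases hkn : k = n
      · subst hkn; simp [H.coeff_self]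
      · rw [hq _ (by omega) hkn, H.coeff_of_lt (by omega)]; simp
  have hL := H.apply_mul_of_degree_lt_succ hdeg
  rw [sub_mul, map_sub, mul_assoc (C _), ← smul_eq_C_mul, map_smul, H.ortho,
    if_neg (by omega), coeff_sub, coeff_C_mul] at hL
  have : subcoeff P (n + 2) = (P (n + 2)).coeff n := by simp [subcoeff]
  rw [this]
  simpa using hL

lemma coeff_eq_zero_of_ne (H : IsMonicOrthogonal L P h) (even : ∀ q, L (q.comp (-X)) = L q)
    {n k : ℕ} (hk : n < k + 2) (hkn : k ≠ n) : (P n).coeff k = 0 := by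
  rcases lt_or_ge n k with hlt | hle
  · exact H.coeff_of_lt hlt
  · obtain rfl : n = k + 1 := by omega
    exact H.coeff_pred even k

lemma apply_X_sq_mul_self (H : IsMonicOrthogonal L P h) (even : ∀ q, L (q.comp (-X)) = L q)
    (n : ℕ) : L (X ^ 2 * P n * P n) = (subcoeff P n - subcoeff P (n + 2)) * h n := by
  rw [H.apply_X_sq_mul even fun k => H.coeff_eq_zero_of_ne even, H.coeff_self, one_mul, ← subcoeff]

lemma coeff_X_mul_derivative (q : ℝ[X]) (k : ℕ) :
    (X * derivative q).coeff k = k * q.coeff k := by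
  cases k with
  | zero => simp
  | succ k => rw [coeff_X_mul, coeff_derivative]; push_cast; ring

lemma apply_X_mul_derivative (H : IsMonicOrthogonal L P h) (n : ℕ) :
    L (X * derivative (P n) * P n) = n * h n := by
  rw [H.apply_mul_of_degree_lt_succ, coeff_X_mul_derivative, H.coeff_self, mul_one]
  refine (degree_lt_iff_coeff_zero _ _).2 fun k hk => ?_
  rw [coeff_X_mul_derivative, H.coeff_of_lt (by omega), mul_zero]

lemma apply_X_sq_mul_X_mul_derivative (H : IsMonicOrthogonal L P h)
    (even : ∀ q, L (q.comp (-X)) = L q) (n : ℕ) :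
    L (X ^ 2 * (X * derivative (P n)) * P n)
      = ((n - 2) * subcoeff P n - n * subcoeff P (n + 2)) * h n := by
  rw [H.apply_X_sq_mul even, coeff_X_mul_derivative, H.coeff_self, mul_one, subcoeff.eq_1 P n,
    coeff_X_pow_mul', coeff_X_pow_mul']
  · congr 2
    split_ifs with hn
    · rw [coeff_X_mul_derivative, Nat.cast_sub hn]; simp
    · simp
  · intro k hk hkn
    rw [coeff_X_mul_derivative, H.coeff_eq_zero_of_ne even hk hkn, mul_zero]

end IsMonicOrthogonal

/-- The Gram matrix of monic polynomials of consecutive degrees has the same determinant as the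
Hankel matrix of moments. -/
lemma det_hankel_eq_det_gram (L : Polynomial ℝ →ₗ[ℝ] ℝ) {P : ℕ → Polynomial ℝ}
    (monic : ∀ n, (P n).Monic) (natDegree : ∀ n, (P n).natDegree = n) (n : ℕ) :
    (Matrix.of fun i j : Fin n => L (Polynomial.X ^ ((i : ℕ) + (j : ℕ)))).det
      = (Matrix.of fun i j : Fin n => L (P i * P j)).det := by
  set U : Matrix (Fin n) (Fin n) ℝ := Matrix.of fun i j => (P j).coeff i with hU
  have hdet : U.det = 1 :=
    Matrix.det_matrixOfPolynomials (fun i : Fin n => P i) (fun i => natDegree i) fun i => monic i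
  have hsum : ∀ i : Fin n,
      P i = ∑ k : Fin n, (P i).coeff k • (Polynomial.X : Polynomial ℝ) ^ (k : ℕ) := by
    intro i
    conv_lhs => rw [(P i).as_sum_range' n (by rw [natDegree]; exact i.2)]
    rw [Fin.sum_univ_eq_sum_range (fun k => (P i).coeff k • (Polynomial.X : Polynomial ℝ) ^ k) n]
    exact Finset.sum_congr rfl fun k _ => (Polynomial.smul_X_eq_monomial).symm
  have hmul : (Matrix.of fun i j : Fin n => L (P i * P j))
      = U.transpose * (Matrix.of fun i j : Fin n => L (Polynomial.X ^ ((i : ℕ) + (j : ℕ)))) * U := by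
    ext i j
    rw [Matrix.of_apply, hsum i, hsum j, Finset.sum_mul_sum, Finset.sum_comm]
    simp only [Matrix.mul_apply, Finset.sum_mul, map_sum, hU, Matrix.of_apply,
      Matrix.transpose_apply]
    refine Finset.sum_congr rfl fun k _ => Finset.sum_congr rfl fun l _ => ?_
    rw [smul_mul_smul_comm, map_smul, ← pow_add, smul_eq_mul]
    ring
  rw [hmul, Matrix.det_mul, Matrix.det_mul, Matrix.det_transpose, hdet, one_mul, mul_one]

/-- At a point where a matrix-valued function is diagonal, only the diagonal entries contribute
to the derivative of its determinant. -/
lemma hasDerivAt_det_of_diagonal {ι : Type*} [Fintype ι] [DecidableEq ι]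
    {M : ℝ → Matrix ι ι ℝ} {M' : Matrix ι ι ℝ} {t : ℝ}
    (hM : ∀ i j, HasDerivAt (fun s => M s i j) (M' i j) t)
    (hdiag : ∀ i j, i ≠ j → M t i j = 0) :
    HasDerivAt (fun s => (M s).det)
      (∑ i, (∏ j ∈ Finset.univ.erase i, M t j j) * M' i i) t := by
  have hperm : ∀ σ : Equiv.Perm ι, HasDerivAt
      (fun s => ((Equiv.Perm.sign σ : ℤ) : ℝ) * ∏ i, M s (σ i) i)
      (((Equiv.Perm.sign σ : ℤ) : ℝ) *
        ∑ i, (∏ j ∈ Finset.univ.erase i, M t (σ j) j) • M' (σ i) i) t := fun σ =>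
    (HasDerivAt.fun_finsetProd fun i _ => hM (σ i) i).const_mul _
  have hsum := HasDerivAt.fun_sum (u := Finset.univ) fun σ _ => hperm σ
  simp only [Matrix.det_apply']
  refine hsum.congr_deriv (Eq.symm ?_)
  rw [Finset.sum_eq_single (1 : Equiv.Perm ι)]
  · simp
  · intro σ _ hσ
    rw [Finset.sum_eq_zero, mul_zero]
    intro i _
    obtain ⟨j, hj, hji⟩ : ∃ j, σ j ≠ j ∧ j ≠ i := by
      by_contra! hcon
      refine hσ (Equiv.ext fun j => ?_)
      by_contra hj
      have hji := hcon j hj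
      have := hcon (σ j) fun h => hj (σ.injective h)
      exact hj (this.trans hji.symm)
    have hprod : ∏ k ∈ Finset.univ.erase i, M t (σ k) k = 0 :=
      Finset.prod_eq_zero (Finset.mem_erase.2 ⟨hji, Finset.mem_univ j⟩) (hdiag _ _ hj)
    rw [hprod, zero_smul]
  · simp

section Weight

open Set Polynomial

variable {α β t : ℝ}

lemma one_sub_mul_sq_pos {x : ℝ} (ht : t < 1) (hx : x ∈ Icc (-1 : ℝ) 1) : 0 < 1 - t * x ^ 2 := by
  have hx1 : x ^ 2 ≤ 1 := (sq_le_one_iff_abs_le_one x).2 (abs_le.2 hx)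
  rcases le_or_gt t 0 with h0 | h0
  · nlinarith [sq_nonneg x]
  · nlinarith [sq_nonneg x]

lemma continuousOn_one_sub_mul_sq_rpow (ht : t < 1) (β : ℝ) :
    ContinuousOn (fun x : ℝ => (1 - t * x ^ 2) ^ β) (Icc (-1) 1) :=
  ContinuousOn.rpow_const (by fun_prop) fun _ hx => Or.inl (one_sub_mul_sq_pos ht hx).ne'

lemma intervalIntegrable_one_sub_sq_rpow (hα : -1 < α) :
    IntervalIntegrable (fun x : ℝ => (1 - x ^ 2) ^ α) volume (-1) 1 := by
  have hright : IntervalIntegrable (fun x : ℝ => (1 - x ^ 2) ^ α) volume 0 1 := by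
    have h1 : IntervalIntegrable (fun x : ℝ => (1 - x) ^ α) volume 0 1 := by
      simpa using ((intervalIntegral.intervalIntegrable_rpow' (a := 0) (b := 1) hα).comp_sub_left
        1).symm
    have h2 : ContinuousOn (fun x : ℝ => (1 + x) ^ α) (uIcc 0 1) := by
      rw [uIcc_of_le zero_le_one]
      refine ContinuousOn.rpow_const (by fun_prop) fun x hx => Or.inl ?_
      linarith [hx.1]
    refine (h1.mul_continuousOn h2).congr fun x hx => ?_
    rw [uIoc_of_le zero_le_one] at hx
    rw [← Real.mul_rpow (by linarith [hx.2]) (by linarith [hx.1])]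
    ring_nf
  have hleft : IntervalIntegrable (fun x : ℝ => (1 - x ^ 2) ^ α) volume (-1) 0 := by
    simpa using ((IntervalIntegrable.iff_comp_neg (by finiteness)).1 hright).symm
  exact hleft.trans hright

lemma intervalIntegrable_weight (hα : -1 < α) {f g : ℝ → ℝ} (hf : ContinuousOn f (Icc (-1) 1))
    (hg : ContinuousOn g (Icc (-1) 1)) :
    IntervalIntegrable (fun x => f x * ((1 - x ^ 2) ^ α * g x)) volume (-1) 1 := by
  rw [← uIcc_of_le (by norm_num : (-1 : ℝ) ≤ 1)] at hf hg
  exact ((intervalIntegrable_one_sub_sq_rpow hα).mul_continuousOn hg).continuousOn_mul hf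

/-- Integration of polynomials against `(1 - x²)^α (1 - t x²)^β` on `[-1, 1]`. -/
noncomputable def weightFunctional (hα : -1 < α) (β : ℝ) (ht : t < 1) : ℝ[X] →ₗ[ℝ] ℝ where
  toFun q := ∫ x in (-1 : ℝ)..1, q.eval x * ((1 - x ^ 2) ^ α * (1 - t * x ^ 2) ^ β)
  map_add' p q := by
    simp only [eval_add, add_mul]
    exact intervalIntegral.integral_add
      (intervalIntegrable_weight hα (by fun_prop) (continuousOn_one_sub_mul_sq_rpow ht β))
      (intervalIntegrable_weight hα (by fun_prop) (continuousOn_one_sub_mul_sq_rpow ht β))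
  map_smul' c q := by
    simp only [eval_smul, smul_eq_mul, mul_assoc, RingHom.id_apply]
    exact intervalIntegral.integral_const_mul _ _

lemma weightFunctional_apply (hα : -1 < α) (ht : t < 1) (q : ℝ[X]) :
    weightFunctional hα β ht q
      = ∫ x in (-1 : ℝ)..1, q.eval x * ((1 - x ^ 2) ^ α * (1 - t * x ^ 2) ^ β) := rfl

lemma weightFunctional_comp_neg_X (hα : -1 < α) (ht : t < 1) (q : ℝ[X]) :
    weightFunctional hα β ht (q.comp (-X)) = weightFunctional hα β ht q := by
  have := intervalIntegral.integral_comp_neg (a := -1) (b := 1)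
    (fun x : ℝ => q.eval x * ((1 - x ^ 2) ^ α * (1 - t * x ^ 2) ^ β))
  simpa [weightFunctional_apply, eval_comp] using this

lemma rpow_le_one_add_rpow {δ y : ℝ} (hδ : 0 < δ) (hδy : δ ≤ y) (hy : y ≤ 1) (γ : ℝ) :
    y ^ γ ≤ 1 + δ ^ γ := by
  rcases le_or_gt 0 γ with hγ | hγ
  · linarith [Real.rpow_le_one (hδ.le.trans hδy) hy hγ, Real.rpow_nonneg hδ.le γ]
  · linarith [Real.rpow_le_rpow_of_nonpos hδ hδy hγ.le]

lemma hasDerivAt_integral_weight (hα : -1 < α) (β : ℝ) (ht : t ∈ Ioo (0 : ℝ) 1) (q : ℝ[X]) :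
    HasDerivAt
      (fun s => ∫ x in (-1 : ℝ)..1, q.eval x * ((1 - x ^ 2) ^ α * (1 - s * x ^ 2) ^ β))
      (∫ x in (-1 : ℝ)..1, q.eval x *
        ((1 - x ^ 2) ^ α * (-x ^ 2 * β * (1 - t * x ^ 2) ^ (β - 1)))) t := by
  obtain ⟨ht0, ht1⟩ := ht
  have hIoc : uIoc (-1 : ℝ) 1 ⊆ Icc (-1) 1 := by
    rw [uIoc_of_le (by norm_num)]; exact Ioc_subset_Icc_self
  have hint : ∀ {s : ℝ}, s < 1 → IntervalIntegrable
      (fun x => q.eval x * ((1 - x ^ 2) ^ α * (1 - s * x ^ 2) ^ β)) volume (-1) 1 := fun hs =>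
    intervalIntegrable_weight hα (by fun_prop) (continuousOn_one_sub_mul_sq_rpow hs β)
  refine (intervalIntegral.hasDerivAt_integral_of_dominated_loc_of_deriv_le
    (s := Ioo 0 ((1 + t) / 2))
    (bound := fun x => |q.eval x| * ((1 - x ^ 2) ^ α * (|β| * (1 + ((1 - t) / 2) ^ (β - 1)))))
    (F := fun s x => q.eval x * ((1 - x ^ 2) ^ α * (1 - s * x ^ 2) ^ β))
    (F' := fun s x => q.eval x * ((1 - x ^ 2) ^ α * (-x ^ 2 * β * (1 - s * x ^ 2) ^ (β - 1))))
    (Ioo_mem_nhds ht0 (by linarith)) ?_ (hint ht1) ?_ ?_ ?_ ?_).2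
  · filter_upwards [Iio_mem_nhds ht1] with s hs
    exact (hint hs).aestronglyMeasurable_restrict_uIoc
  · exact (intervalIntegrable_weight hα (by fun_prop) (ContinuousOn.mul (by fun_prop)
      (continuousOn_one_sub_mul_sq_rpow ht1 (β - 1)))).aestronglyMeasurable_restrict_uIoc
  · refine Filter.Eventually.of_forall fun x hx s hs => ?_
    have hx := hIoc hx
    have hx1 : x ^ 2 ≤ 1 := (sq_le_one_iff_abs_le_one x).2 (abs_le.2 hx)
    have hpos := Real.rpow_nonneg (sub_nonneg.2 hx1) α
    have hy : 0 < 1 - s * x ^ 2 := one_sub_mul_sq_pos (by linarith [hs.2]) hx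
    have hle := rpow_le_one_add_rpow (δ := (1 - t) / 2) (y := 1 - s * x ^ 2) (by linarith)
      (by nlinarith [hs.1, hs.2, sq_nonneg x]) (by nlinarith [hs.1, sq_nonneg x]) (β - 1)
    have hy0 := Real.rpow_nonneg hy.le (β - 1)
    rw [Real.norm_eq_abs, abs_mul, abs_mul, abs_mul, abs_mul, abs_neg, abs_of_nonneg hpos,
      abs_of_nonneg hy0, abs_of_nonneg (sq_nonneg x)]
    gcongr
    exact mul_le_of_le_one_left (abs_nonneg β) hx1
  · exact intervalIntegrable_weight hα (by fun_prop) (by fun_prop)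
  · refine Filter.Eventually.of_forall fun x hx s hs => ?_
    have hy : 0 < 1 - s * x ^ 2 := one_sub_mul_sq_pos (by linarith [hs.2]) (hIoc hx)
    have hlin : HasDerivAt (fun s : ℝ => 1 - s * x ^ 2) (-x ^ 2) s := by
      simpa using ((hasDerivAt_id s).mul_const (x ^ 2)).const_sub 1
    exact ((hlin.rpow_const (Or.inl hy.ne')).const_mul _).const_mul _

/-- The derivative in `t` of the weighted integral of `q` is expressed through weighted integrals
of polynomials, by integrating the derivative of `x (1 - x²) q(x) w(x, t)`. -/
lemma integral_deriv_weight (hα : -1 < α) (β : ℝ) (ht : t < 1) (q : ℝ[X]) :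
    2 * (t - 1) * (∫ x in (-1 : ℝ)..1, q.eval x *
        ((1 - x ^ 2) ^ α * (-x ^ 2 * β * (1 - t * x ^ 2) ^ (β - 1))))
      = weightFunctional hα β ht
          (C (2 * (α + 1 + β)) * (X ^ 2 * q) - (1 - X ^ 2) * (q + X * derivative q)) := by
  have hcont := continuousOn_one_sub_mul_sq_rpow ht
  have hI1 : IntervalIntegrable (fun x : ℝ => (2 * (t - 1)) * (q.eval x *
      ((1 - x ^ 2) ^ α * (-x ^ 2 * β * (1 - t * x ^ 2) ^ (β - 1))))) volume (-1) 1 :=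
    (intervalIntegrable_weight hα (by fun_prop)
      (ContinuousOn.mul (by fun_prop) (hcont (β - 1)))).const_mul _
  have hI2 := intervalIntegrable_weight hα (α := α) (g := fun x => (1 - t * x ^ 2) ^ β)
    (f := fun x => (C (2 * (α + 1 + β)) * (X ^ 2 * q)
      - (1 - X ^ 2) * (q + X * derivative q)).eval x) (by fun_prop) (hcont β)
  have hFTC := intervalIntegral.integral_eq_sub_of_hasDerivAt_of_le (by norm_num : (-1 : ℝ) ≤ 1)
    (f := fun x => x * q.eval x * ((1 - x ^ 2) ^ (α + 1) * (1 - t * x ^ 2) ^ β))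
    ?_ ?_ (hI1.sub hI2)
  · rw [intervalIntegral.integral_sub hI1 hI2, intervalIntegral.integral_const_mul] at hFTC
    rw [weightFunctional_apply, ← sub_eq_zero, hFTC]
    simp [Real.zero_rpow (by linarith : α + 1 ≠ 0)]
  · refine ContinuousOn.mul (by fun_prop) (ContinuousOn.mul ?_ (hcont β))
    exact ContinuousOn.rpow_const (by fun_prop) fun _ _ => Or.inr (by linarith)
  · intro x hx
    have hy := one_sub_mul_sq_pos ht (Ioo_subset_Icc_self hx)
    have hu : 0 < 1 - x ^ 2 := by nlinarith [hx.1, hx.2]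
    have hd1 : HasDerivAt (fun x : ℝ => 1 - x ^ 2) (-(2 * x)) x := by
      simpa using (hasDerivAt_pow 2 x).const_sub 1
    have hd2 : HasDerivAt (fun x : ℝ => 1 - t * x ^ 2) (-(t * (2 * x))) x := by
      simpa using ((hasDerivAt_pow 2 x).const_mul t).const_sub 1
    refine (((hasDerivAt_id x).mul (q.hasDerivAt x)).mul
      ((hd1.rpow_const (p := α + 1) (Or.inl hu.ne')).mul
        (hd2.rpow_const (p := β) (Or.inl hy.ne')))).congr_deriv ?_
    have e1 : (1 - x ^ 2) ^ (α + 1) = (1 - x ^ 2) ^ α * (1 - x ^ 2) := Real.rpow_add_one hu.ne' α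
    have e2 : (1 - t * x ^ 2) ^ β = (1 - t * x ^ 2) ^ (β - 1) * (1 - t * x ^ 2) := by
      rw [← Real.rpow_add_one hy.ne', sub_add_cancel]
    simp only [add_sub_cancel_right, e1, e2, eval_sub, eval_mul, eval_add, eval_C, eval_pow,
      eval_X, eval_one, id, Pi.mul_apply]
    ring

end Weight

section Hankel

open Set Polynomial IsMonicOrthogonal

variable {α β t : ℝ} {P : ℕ → ℝ[X]} {h : ℕ → ℝ}

lemma hankelW_eq_det_gram (hα : -1 < α) (β : ℝ) {s : ℝ} (hs : s < 1)
    (monic : ∀ n, (P n).Monic) (natDegree : ∀ n, (P n).natDegree = n) (n : ℕ) :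
    hankelW α β s n = (Matrix.of fun i j : Fin n => ∫ x in (-1 : ℝ)..1,
      (P i * P j).eval x * ((1 - x ^ 2) ^ α * (1 - s * x ^ 2) ^ β)).det := by
  have := det_hankel_eq_det_gram (weightFunctional hα β hs) monic natDegree n
  simpa only [weightFunctional_apply, eval_pow, eval_X, hankelW] using this

lemma two_mul_integral_deriv_weight_sq_div (hα : -1 < α) (ht : t < 1)
    (H : IsMonicOrthogonal (weightFunctional hα β ht) P h) (n : ℕ) :
    2 * (t - 1) * ((∫ x in (-1 : ℝ)..1, (P n * P n).eval x *
        ((1 - x ^ 2) ^ α * (-x ^ 2 * β * (1 - t * x ^ 2) ^ (β - 1)))) / h n)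
      = (2 * α + 2 * β + 3) * (subcoeff P n - subcoeff P (n + 2)) - 1 - 2 * n
          + 2 * ((n - 2) * subcoeff P n - n * subcoeff P (n + 2)) := by
  have even := weightFunctional_comp_neg_X (β := β) hα ht
  have hpoly : C (2 * (α + 1 + β)) * (X ^ 2 * (P n * P n))
        - (1 - X ^ 2) * (P n * P n + X * derivative (P n * P n))
      = (2 * α + 2 * β + 3) • (X ^ 2 * P n * P n) - P n * P n
        - (2 : ℝ) • (X * derivative (P n) * P n)
        + (2 : ℝ) • (X ^ 2 * (X * derivative (P n)) * P n) := by
    simp only [smul_eq_C_mul, derivative_mul, C_add, C_mul, C_1, map_ofNat]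
    ring
  rw [← mul_div_assoc, div_eq_iff (H.pos n).ne', integral_deriv_weight hα β ht, hpoly]
  simp only [map_add, map_sub, map_smul, smul_eq_mul, H.apply_X_sq_mul_self even,
    H.apply_X_mul_derivative, H.apply_X_sq_mul_X_mul_derivative even, H.ortho, if_true]
  ring

lemma hasDerivAt_log_hankelW (hα : -1 < α) (ht : t ∈ Ioo (0 : ℝ) 1)
    (H : IsMonicOrthogonal (weightFunctional hα β ht.2) P h) (n : ℕ) :
    HasDerivAt (fun s => Real.log (hankelW α β s n))
      (∑ i ∈ Finset.range n, (∫ x in (-1 : ℝ)..1, (P i * P i).eval x *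
        ((1 - x ^ 2) ^ α * (-x ^ 2 * β * (1 - t * x ^ 2) ^ (β - 1)))) / h i) t := by
  have hgram : ∀ i j : ℕ, (∫ x in (-1 : ℝ)..1,
      (P i * P j).eval x * ((1 - x ^ 2) ^ α * (1 - t * x ^ 2) ^ β)) = if i = j then h j else 0 :=
    H.ortho
  have hdet := hasDerivAt_det_of_diagonal (ι := Fin n) (t := t)
    (M := fun s => Matrix.of fun i j : Fin n => ∫ x in (-1 : ℝ)..1,
      (P i * P j).eval x * ((1 - x ^ 2) ^ α * (1 - s * x ^ 2) ^ β))
    (M' := Matrix.of fun i j : Fin n => ∫ x in (-1 : ℝ)..1, (P i * P j).eval x *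
      ((1 - x ^ 2) ^ α * (-x ^ 2 * β * (1 - t * x ^ 2) ^ (β - 1))))
    (fun i j => hasDerivAt_integral_weight hα β ht (P i * P j))
    (fun i j hij => by simp only [Matrix.of_apply]; rw [hgram, if_neg (Fin.val_ne_of_ne hij)])
  have hD : HasDerivAt (fun s => hankelW α β s n) _ t := hdet.congr_of_eventuallyEq (by
    filter_upwards [Iio_mem_nhds ht.2] with s hs
    exact hankelW_eq_det_gram hα β hs H.monic H.natDegree n)
  have hval : hankelW α β t n = ∏ i : Fin n, h i := by
    rw [hankelW_eq_det_gram hα β ht.2 H.monic H.natDegree n, ← Matrix.det_diagonal]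
    congr 1
    ext i j
    rw [Matrix.of_apply, hgram, Matrix.diagonal_apply]
    by_cases hij : i = j
    · simp [hij]
    · rw [if_neg hij, if_neg (Fin.val_ne_of_ne hij)]
  have hne : hankelW α β t n ≠ 0 := by
    rw [hval]; exact Finset.prod_ne_zero_iff.2 fun i _ => (H.pos i).ne'
  refine (hD.log hne).congr_deriv ?_
  rw [hval, Finset.sum_div, ← Fin.sum_univ_eq_sum_range (fun i => (∫ x in (-1 : ℝ)..1,
    (P i * P i).eval x *
      ((1 - x ^ 2) ^ α * (-x ^ 2 * β * (1 - t * x ^ 2) ^ (β - 1)))) / h i) n]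
  refine Finset.sum_congr rfl fun i _ => ?_
  simp only [Matrix.of_apply, hgram, if_true]
  rw [← Finset.mul_prod_erase Finset.univ (fun i : Fin n => h i) (Finset.mem_univ i),
    mul_comm (h i)]
  exact mul_div_mul_left _ _ (Finset.prod_ne_zero_iff.2 fun j _ => (H.pos j).ne')

/-- The sum of the logarithmic derivatives of the squared norms telescopes. -/
lemma sum_range_telescope (a : ℝ) {p : ℕ → ℝ} (h0 : p 0 = 0) (h1 : p 1 = 0) (n : ℕ) :
    ∑ i ∈ Finset.range n, (a * (p i - p (i + 2)) - 1 - 2 * (i : ℝ)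
        + 2 * ((i - 2) * p i - i * p (i + 2)))
      = -(a + 2 * n - 4) * p n - (a + 2 * n - 2) * p (n + 1) - (n : ℝ) ^ 2 := by
  induction n with
  | zero => simp [h0, h1]
  | succ n ih => rw [Finset.sum_range_succ, ih]; push_cast; ring

end Hankel

/-- With `H_n(t) = t(t−1) d/dt log D_n[w(·,t)]`, one has, for
`n ≥ 1` and `t = k² ∈ (0,1)`:
`H_n(t) = −t(α+β+n−1/2)p1(n) − t(α+β+n+1/2)p1(n+1) − n²t/2`. -/
theorem stmt_17
    (α β : ℝ) (hα : -1 < α)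
    (P : ℝ → ℕ → Polynomial ℝ) (h : ℝ → ℕ → ℝ) (p1 : ℝ → ℕ → ℝ)
    (hyp : ∀ t ∈ Set.Ioo (0:ℝ) 1,
      (∀ n, (P t n).Monic) ∧ (∀ n, (P t n).natDegree = n) ∧ (∀ n, 0 < h t n) ∧
      (∀ m n : ℕ,
        (∫ x in (-1:ℝ)..1, (P t m).eval x * (P t n).eval x *
            ((1 - x ^ 2) ^ α * (1 - t * x ^ 2) ^ β))
          = if m = n then h t n else 0) ∧
      p1 t 0 = 0 ∧ p1 t 1 = 0 ∧
      (∀ n : ℕ, 2 ≤ n → p1 t n = (P t n).coeff (n - 2))) :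
    ∀ t ∈ Set.Ioo (0:ℝ) 1, ∀ n : ℕ, 1 ≤ n →
      t * (t - 1) * deriv (fun s => Real.log (hankelW α β s n)) t
        = -t * (α + β + (n:ℝ) - 1/2) * p1 t n
          - t * (α + β + (n:ℝ) + 1/2) * p1 t (n + 1)
          - (n:ℝ) ^ 2 * t / 2 := by
  intro t ht n _
  obtain ⟨monic, natDegree, pos, ortho, h0, h1, hp⟩ := hyp t ht
  have H : IsMonicOrthogonal (weightFunctional hα β ht.2) (P t) (h t) :=
    ⟨monic, natDegree, pos, fun m n => by
      simpa only [weightFunctional_apply, Polynomial.eval_mul] using ortho m n⟩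
  have hsub : ∀ j, IsMonicOrthogonal.subcoeff (P t) j = p1 t j := by
    intro j
    rw [IsMonicOrthogonal.subcoeff, Polynomial.coeff_X_pow_mul']
    split_ifs with hj
    · exact (hp j hj).symm
    · obtain rfl | rfl : j = 0 ∨ j = 1 := by omega
      exacts [h0.symm, h1.symm]
  have hsum := sum_range_telescope (2 * α + 2 * β + 3) h0 h1 n
  rw [(hasDerivAt_log_hankelW hα ht H n).deriv]
  have hterm := two_mul_integral_deriv_weight_sq_div hα ht.2 H
  simp only [hsub] at hterm
  rw [Finset.sum_congr rfl fun i _ => (hterm i).symm, ← Finset.mul_sum] at hsum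
  linear_combination t / 2 * hsum
end

section
/- As n → ∞ the recurrence coefficients satisfy β_n → 1/4, lim_{n→∞} n²·(β_n − 1/4) = (1−4α²)/16, and lim_{n→∞} n³·(β_n − 1/4 − (1−4α²)/(16n²)) = ((4α²−1)/8)·(α + β − β/√(1−k²)). -/
open MeasureTheory
open Polynomial Filter Topology

/-- Iterating a contractive three-term inequality: if `x` is bounded and each `|x (n+1)|` is at most
`q` times the larger neighbour plus a null sequence, then `x` is a null sequence. -/
lemma tendsto_zero_of_three_term_contraction {x ρ : ℕ → ℝ} {q C : ℝ} (hq0 : 0 ≤ q) (hq1 : q < 1)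
    (hC : ∀ n, |x n| ≤ C) (hρ : Tendsto ρ atTop (𝓝 0))
    (hx : ∀ᶠ n in atTop, |x (n + 1)| ≤ q * max |x n| |x (n + 2)| + ρ n) :
    Tendsto x atTop (𝓝 0) := by
  have key : ∀ ε > 0, ∀ j : ℕ, ∀ᶠ n in atTop, |x n| ≤ q ^ j * C + ε / (1 - q) := by
    intro ε hε j
    have h1q : 0 < 1 - q := by linarith
    induction j with
    | zero =>
      refine Eventually.of_forall fun n => ?_
      have : 0 < ε / (1 - q) := by positivity
      have := hC n
      simp only [pow_zero, one_mul]
      linarith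
    | succ j ih =>
      have h2 : ∀ᶠ n in atTop, |x (n + 2)| ≤ q ^ j * C + ε / (1 - q) :=
        (tendsto_add_atTop_nat 2).eventually ih
      have h3 : ∀ᶠ n in atTop, ρ n < ε := hρ.eventually (gt_mem_nhds hε)
      have h4 : ∀ᶠ n in atTop, |x (n + 1)| ≤ q ^ (j + 1) * C + ε / (1 - q) := by
        filter_upwards [ih, h2, h3, hx] with n a1 a2 a3 a4
        have a5 : q * max |x n| |x (n + 2)| ≤ q * (q ^ j * C + ε / (1 - q)) :=
          mul_le_mul_of_nonneg_left (max_le a1 a2) hq0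
        have a6 : q * (q ^ j * C + ε / (1 - q)) + ε = q ^ (j + 1) * C + ε / (1 - q) := by
          field_simp
          ring
        linarith
      obtain ⟨N, hN⟩ := eventually_atTop.1 h4
      refine eventually_atTop.2 ⟨N + 1, fun n hn => ?_⟩
      obtain ⟨m, rfl⟩ : ∃ m, n = m + 1 := ⟨n - 1, by omega⟩
      exact hN m (by omega)
  rw [Metric.tendsto_nhds]
  intro ε hε
  have h1q : 0 < 1 - q := by linarith
  have hpow : Tendsto (fun j : ℕ => q ^ j * C) atTop (𝓝 0) := by
    simpa using (tendsto_pow_atTop_nhds_zero_of_lt_one hq0 hq1).mul_const C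
  obtain ⟨j, hj⟩ := (hpow.eventually (gt_mem_nhds (half_pos hε))).exists
  filter_upwards [key (ε / 4 * (1 - q)) (by positivity) j] with n hn
  rw [mul_div_cancel_right₀ _ h1q.ne'] at hn
  simp only [Real.dist_eq, sub_zero]
  linarith

/-- A bounded solution of a contractive three-term inequality with forcing `K / (n+1)²` is
`O(1/n²)`. -/
lemma sq_mul_abs_le_of_three_term_contraction {x : ℕ → ℝ} {q C K : ℝ} (hq0 : 0 ≤ q) (hq1 : q < 1)
    (hC : ∀ n, |x n| ≤ C)
    (hx : ∀ᶠ n : ℕ in atTop,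
      |x (n + 1)| ≤ q * max |x n| |x (n + 2)| + K / ((n : ℝ) + 1) ^ 2) :
    ∃ C', ∀ n : ℕ, (n : ℝ) ^ 2 * |x n| ≤ C' := by
  have hratio : Tendsto (fun n : ℕ => q * (((n : ℝ) + 1) / n) ^ 2) atTop (𝓝 (q * 1 ^ 2)) := by
    refine ((Tendsto.pow ?_ 2).const_mul q)
    have h0 := (tendsto_const_nhds (x := (1 : ℝ))).add (tendsto_inv_atTop_nhds_zero_nat (𝕜 := ℝ))
    rw [add_zero] at h0
    refine h0.congr' ?_
    filter_upwards [eventually_ge_atTop 1] with n hn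
    have : (n : ℝ) ≠ 0 := by positivity
    field_simp
  have hq' : q * 1 ^ 2 < (1 + q) / 2 := by linarith
  have hev := (hx.and (hratio.eventually (gt_mem_nhds hq'))).and (eventually_ge_atTop 1)
  obtain ⟨n₀, hn₀⟩ := eventually_atTop.1 hev
  have hn₀1 : 1 ≤ n₀ := (hn₀ n₀ le_rfl).2
  set D : ℝ := max (2 * |K| / (1 - q)) ((n₀ : ℝ) ^ 2 * |x n₀|) with hD
  have hD0 : 0 ≤ D := le_trans (by positivity) (le_max_right _ _)
  have hDK : K ≤ D * ((1 - q) / 2) := by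
    have h1 : 2 * |K| / (1 - q) ≤ D := le_max_left _ _
    have h1q : 0 < 1 - q := by linarith
    rw [div_le_iff₀ h1q] at h1
    linarith [le_abs_self K]
  have hC0 : 0 ≤ C := (abs_nonneg _).trans (hC 0)
  have key : ∀ j : ℕ, ∀ n, n₀ ≤ n → |x n| ≤ D / (n : ℝ) ^ 2 + q ^ j * C := by
    intro j
    induction j with
    | zero =>
      intro n _
      have : 0 ≤ D / (n : ℝ) ^ 2 := by positivity
      have := hC n
      simp only [pow_zero, one_mul]
      linarith
    | succ j ih =>
      intro n hn
      rcases hn.eq_or_lt with rfl | hlt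
      · have hp : (0 : ℝ) < (n₀ : ℝ) ^ 2 := by positivity
        have : |x n₀| ≤ D / (n₀ : ℝ) ^ 2 := by
          rw [le_div_iff₀ hp, mul_comm]
          exact le_max_right _ _
        have : 0 ≤ q ^ (j + 1) * C := by positivity
        linarith
      · obtain ⟨m, rfl⟩ : ∃ m, n = m + 1 := ⟨n - 1, by omega⟩
        have hm : n₀ ≤ m := by omega
        obtain ⟨⟨a1, a2⟩, a3⟩ := hn₀ m hm
        have hmpos : (0 : ℝ) < m := by exact_mod_cast a3
        have b1 := ih m hm
        have b2 := ih (m + 2) (by omega)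
        have b3 : D / ((m + 2 : ℕ) : ℝ) ^ 2 ≤ D / (m : ℝ) ^ 2 := by
          gcongr
          linarith
        have b4 : max |x m| |x (m + 2)| ≤ D / (m : ℝ) ^ 2 + q ^ j * C :=
          max_le b1 (by linarith)
        have b5 := mul_le_mul_of_nonneg_left b4 hq0
        have b6 : q * (D / (m : ℝ) ^ 2) + K / ((m : ℝ) + 1) ^ 2 ≤ D / ((m : ℝ) + 1) ^ 2 := by
          have e : q * (D / (m : ℝ) ^ 2)
              = (q * (((m : ℝ) + 1) / m) ^ 2) * D / ((m : ℝ) + 1) ^ 2 := by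
            field_simp
          rw [e, ← add_div]
          gcongr
          nlinarith [mul_le_mul_of_nonneg_right a2.le hD0]
        push_cast
        calc |x (m + 1)| ≤ q * max |x m| |x (m + 2)| + K / ((m : ℝ) + 1) ^ 2 := a1
          _ ≤ q * (D / (m : ℝ) ^ 2 + q ^ j * C) + K / ((m : ℝ) + 1) ^ 2 := by linarith
          _ ≤ D / ((m : ℝ) + 1) ^ 2 + q ^ (j + 1) * C := by
            rw [pow_succ q j]
            linarith
  refine ⟨max D ((n₀ : ℝ) ^ 2 * C), fun n => ?_⟩
  rcases le_or_gt n₀ n with hn | hn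
  · refine le_trans ?_ (le_max_left _ _)
    have hnp : (0 : ℝ) < (n : ℝ) ^ 2 := by
      have : (0 : ℝ) < n := by exact_mod_cast (lt_of_lt_of_le hn₀1 hn)
      positivity
    have hlim : Tendsto (fun j : ℕ => D / (n : ℝ) ^ 2 + q ^ j * C) atTop
        (𝓝 (D / (n : ℝ) ^ 2 + 0 * C)) :=
      ((tendsto_pow_atTop_nhds_zero_of_lt_one hq0 hq1).mul_const C).const_add _
    have := ge_of_tendsto' hlim fun j => key j n hn
    rw [zero_mul, add_zero, le_div_iff₀ hnp] at this
    linarith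
  · refine le_trans ?_ (le_max_right _ _)
    have : (n : ℝ) ≤ n₀ := by exact_mod_cast hn.le
    gcongr
    exact hC n

lemma tendsto_natCast_div_add (m : ℕ) :
    Tendsto (fun n : ℕ => (n : ℝ) / (n + m)) atTop (𝓝 1) :=
  tendsto_natCast_div_add_atTop (m : ℝ)

/-- A bounded solution of a hyperbolic three-term recurrence with vanishing perturbations and
forcing asymptotic to `A / n²` is asymptotic to `A / ((a - 2 b) n²)`. -/
lemma tendsto_sq_mul_of_three_term {η A B C D : ℕ → ℝ} {a b l M : ℝ} (hb : 0 ≤ b)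
    (hab : 2 * b < a) (hM : ∀ n, |η n| ≤ M)
    (hA : Tendsto (fun n : ℕ => (n : ℝ) ^ 2 * A n) atTop (𝓝 l))
    (hB : Tendsto B atTop (𝓝 0)) (hC : Tendsto C atTop (𝓝 0)) (hD : Tendsto D atTop (𝓝 0))
    (h : ∀ᶠ n in atTop, a * η (n + 1) - b * (η n + η (n + 2))
      = A n + B n * η n + C n * η (n + 1) + D n * η (n + 2)) :
    Tendsto (fun n : ℕ => (n : ℝ) ^ 2 * η n) atTop (𝓝 (l / (a - 2 * b))) := by
  have ha : 0 < a := by linarith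
  have r1 : Tendsto (fun n : ℕ => (n : ℝ) / (n + 1)) atTop (𝓝 1) := by
    simpa using tendsto_natCast_div_add 1
  have r2 : Tendsto (fun n : ℕ => (n : ℝ) / (n + 2)) atTop (𝓝 1) := by
    simpa using tendsto_natCast_div_add 2
  obtain ⟨K, hK⟩ : ∃ K, ∀ n : ℕ, (n : ℝ) ^ 2 * |η n| ≤ K := by
    set ε := (a - 2 * b) / 8 with hε
    have hε0 : 0 < ε := by rw [hε]; linarith
    have hd : 0 < a - ε := by rw [hε]; linarith
    refine sq_mul_abs_le_of_three_term_contraction (q := (2 * b + 2 * ε) / (a - ε))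
      (K := 4 * (|l| + 1) / (a - ε)) (by positivity) ?_ hM ?_
    · rw [div_lt_one hd, hε]
      linarith
    · have small : ∀ {E : ℕ → ℝ}, Tendsto E atTop (𝓝 0) → ∀ᶠ n in atTop, |E n| < ε := by
        intro E hE
        have := hE.abs
        rw [abs_zero] at this
        exact this.eventually (gt_mem_nhds hε0)
      have hA' : ∀ᶠ n : ℕ in atTop, |(n : ℝ) ^ 2 * A n| < |l| + 1 :=
        hA.abs.eventually (gt_mem_nhds (by linarith))
      filter_upwards [h, small hB, small hC, small hD, hA', eventually_ge_atTop 1]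
        with n e1 e2 e3 e4 e5 e6
      have hn : (1 : ℝ) ≤ n := by exact_mod_cast e6
      set m := max |η n| |η (n + 2)|
      have m1 : |η n| ≤ m := le_max_left _ _
      have m2 : |η (n + 2)| ≤ m := le_max_right _ _
      have hA2 : |A n| ≤ 4 * (|l| + 1) / ((n : ℝ) + 1) ^ 2 := by
        rw [le_div_iff₀ (by positivity)]
        rw [abs_mul, abs_of_nonneg (by positivity : (0 : ℝ) ≤ (n : ℝ) ^ 2)] at e5
        have : ((n : ℝ) + 1) ^ 2 ≤ 4 * (n : ℝ) ^ 2 := by nlinarith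
        nlinarith [abs_nonneg (A n)]
      have e7 : a * η (n + 1) = b * η n + b * η (n + 2) + A n + B n * η n + C n * η (n + 1)
          + D n * η (n + 2) := by linarith
      have e8 : a * |η (n + 1)| ≤ b * |η n| + b * |η (n + 2)| + |A n| + |B n| * |η n|
          + |C n| * |η (n + 1)| + |D n| * |η (n + 2)| := by
        have := congrArg abs e7
        rw [abs_mul, abs_of_pos ha] at this
        rw [this, ← abs_mul, ← abs_mul, ← abs_mul]
        nth_rewrite 3 [← abs_of_nonneg hb]
        nth_rewrite 4 [← abs_of_nonneg hb]
        rw [← abs_mul, ← abs_mul]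
        refine (abs_add_le _ _).trans (add_le_add_left ?_ _)
        refine (abs_add_le _ _).trans (add_le_add_left ?_ _)
        refine (abs_add_le _ _).trans (add_le_add_left ?_ _)
        refine (abs_add_le _ _).trans (add_le_add_left ?_ _)
        exact abs_add_le _ _
      have f1 : |B n| * |η n| ≤ ε * m := mul_le_mul e2.le m1 (abs_nonneg _) hε0.le
      have f2 : |D n| * |η (n + 2)| ≤ ε * m := mul_le_mul e4.le m2 (abs_nonneg _) hε0.le
      have f3 : |C n| * |η (n + 1)| ≤ ε * |η (n + 1)| :=
        mul_le_mul_of_nonneg_right e3.le (abs_nonneg _)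
      have f4 := mul_le_mul_of_nonneg_left m1 hb
      have f5 := mul_le_mul_of_nonneg_left m2 hb
      have : (2 * b + 2 * ε) / (a - ε) * m + 4 * (|l| + 1) / (a - ε) / ((n : ℝ) + 1) ^ 2
          = ((2 * b + 2 * ε) * m + 4 * (|l| + 1) / ((n : ℝ) + 1) ^ 2) / (a - ε) := by
        field_simp
      rw [this, le_div_iff₀ hd]
      linarith
  set L := l / (a - 2 * b) with hL
  set u : ℕ → ℝ := fun n => (n : ℝ) ^ 2 * η n with hu
  have hub : ∀ n, |u n| ≤ K := fun n => by
    rw [hu]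
    simp only [abs_mul, abs_of_nonneg (by positivity : (0 : ℝ) ≤ (n : ℝ) ^ 2)]
    exact hK n
  have null_mul : ∀ {E : ℕ → ℝ} (m : ℕ), Tendsto E atTop (𝓝 0) →
      Tendsto (fun n => E n * u (n + m)) atTop (𝓝 0) := fun m hE =>
    hE.zero_mul_isBoundedUnder_le
      (isBoundedUnder_of ⟨K, fun n => by simpa using hub (n + m)⟩)
  have sq_ratio : ∀ {r : ℕ → ℝ}, Tendsto r atTop (𝓝 1) →
      Tendsto (fun n => r n ^ 2) atTop (𝓝 1) := fun hr => by simpa using hr.pow 2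
  set ρ : ℕ → ℝ := fun n => ((n : ℝ) ^ 2 * A n - l)
      + B n * u (n + 0)
      + (C n * ((n : ℝ) / (n + 1)) ^ 2 - a * (((n : ℝ) / (n + 1)) ^ 2 - 1)) * u (n + 1)
      + (D n * ((n : ℝ) / (n + 2)) ^ 2 + b * (((n : ℝ) / (n + 2)) ^ 2 - 1)) * u (n + 2) with hρ
  have hρ0 : Tendsto ρ atTop (𝓝 0) := by
    have t1 : Tendsto (fun n : ℕ => (n : ℝ) ^ 2 * A n - l) atTop (𝓝 0) := by
      simpa using hA.sub_const l
    have t2 : Tendsto (fun n : ℕ => C n * ((n : ℝ) / (n + 1)) ^ 2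
        - a * (((n : ℝ) / (n + 1)) ^ 2 - 1)) atTop (𝓝 0) := by
      simpa using (hC.mul (sq_ratio r1)).sub (((sq_ratio r1).sub_const 1).const_mul a)
    have t3 : Tendsto (fun n : ℕ => D n * ((n : ℝ) / (n + 2)) ^ 2
        + b * (((n : ℝ) / (n + 2)) ^ 2 - 1)) atTop (𝓝 0) := by
      simpa using (hD.mul (sq_ratio r2)).add (((sq_ratio r2).sub_const 1).const_mul b)
    simpa [hρ] using ((t1.add (null_mul 0 hB)).add (null_mul 1 t2)).add (null_mul 2 t3)
  have hLl : (a - 2 * b) * L = l := by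
    rw [hL]
    have : a - 2 * b ≠ 0 := by linarith
    field_simp
  have hzero : Tendsto (fun n => u n - L) atTop (𝓝 0) := by
    refine tendsto_zero_of_three_term_contraction (q := 2 * b / a) (C := K + |L|)
      (ρ := fun n => |ρ n| / a) (by positivity) ((div_lt_one ha).2 hab) ?_ ?_ ?_
    · intro n
      exact (abs_sub _ _).trans (add_le_add_left (hub n) _)
    · simpa using hρ0.abs.div_const a
    · filter_upwards [h, eventually_ge_atTop 1] with n e1 e2
      have hn : (0 : ℝ) < n := by exact_mod_cast e2
      have e3 : a * (u (n + 1) - L) = b * (u n - L) + b * (u (n + 2) - L) + ρ n := by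
        have e4 : (n : ℝ) ^ 2 * η (n + 1) = ((n : ℝ) / (n + 1)) ^ 2 * u (n + 1) := by
          simp only [hu]; push_cast; field_simp
        have e5 : (n : ℝ) ^ 2 * η (n + 2) = ((n : ℝ) / (n + 2)) ^ 2 * u (n + 2) := by
          simp only [hu]; push_cast; field_simp
        have e6 : (n : ℝ) ^ 2 * η n = u n := rfl
        simp only [hρ, add_zero]
        linear_combination (n : ℝ) ^ 2 * e1 + (C n - a) * e4 + (D n + b) * e5
          + (B n + b) * e6 - hLl
      have e8 : a * |u (n + 1) - L| ≤ b * |u n - L| + b * |u (n + 2) - L| + |ρ n| := by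
        have := congrArg abs e3
        rw [abs_mul, abs_of_pos ha] at this
        rw [this]
        refine (abs_add_le _ _).trans (add_le_add_left ((abs_add_le _ _).trans ?_) _)
        rw [abs_mul, abs_mul, abs_of_nonneg hb]
      have f4 := mul_le_mul_of_nonneg_left (le_max_left |u n - L| |u (n + 2) - L|) hb
      have f5 := mul_le_mul_of_nonneg_left (le_max_right |u n - L| |u (n + 2) - L|) hb
      have : 2 * b / a * max |u n - L| |u (n + 2) - L| + |ρ n| / a
          = (2 * b * max |u n - L| |u (n + 2) - L| + |ρ n|) / a := by field_simp
      rw [this, le_div_iff₀ ha]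
      linarith
  simpa using hzero.add_const L

/-- A bounded solution of `Z (n+1)² - 1 = c n (Z (n+1) + Z (n+2)) (Z n + Z (n+1))` lying above `1`
converges to the positive fixed point of the limiting equation. -/
lemma tendsto_of_quadratic_three_term {Z c : ℕ → ℝ} {κ K : ℝ} (hκ0 : 0 < κ) (hκ1 : κ < 1)
    (h1 : ∀ n, 1 ≤ Z n) (hK : ∀ n, Z n ≤ K) (hc : Tendsto c atTop (𝓝 (κ / 4)))
    (hZ : ∀ n, Z (n + 1) ^ 2 - 1 = c n * (Z (n + 1) + Z (n + 2)) * (Z n + Z (n + 1))) :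
    Tendsto Z atTop (𝓝 (1 / √(1 - κ))) := by
  have hbu : IsBoundedUnder (· ≤ ·) atTop Z := isBoundedUnder_of ⟨K, hK⟩
  have hbl : IsBoundedUnder (· ≥ ·) atTop Z := isBoundedUnder_of ⟨1, h1⟩
  have hs : 0 < √(1 - κ) := Real.sqrt_pos.2 (by linarith)
  have hsq : √(1 - κ) ^ 2 = 1 - κ := Real.sq_sqrt (by linarith)
  set M := limsup Z atTop with hM
  set m := liminf Z atTop with hm
  have hm1 : 1 ≤ m := le_liminf_of_le hbu.isCoboundedUnder_ge (Eventually.of_forall h1)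
  have hmM : m ≤ M := liminf_le_limsup hbu hbl
  have upper : M ^ 2 - 1 ≤ κ / 4 * (2 * M) ^ 2 := by
    have hlim : Tendsto (fun ε : ℝ => (κ / 4 + ε) * (2 * (M + ε)) ^ 2 - (M - ε) ^ 2 + 1) (𝓝[>] 0)
        (𝓝 ((κ / 4 + 0) * (2 * (M + 0)) ^ 2 - (M - 0) ^ 2 + 1)) :=
      (Continuous.tendsto (by fun_prop) 0).mono_left nhdsWithin_le_nhds
    have hev : ∀ᶠ ε : ℝ in 𝓝[>] 0, 0 ≤ (κ / 4 + ε) * (2 * (M + ε)) ^ 2 - (M - ε) ^ 2 + 1 := by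
      filter_upwards [Ioo_mem_nhdsGT (zero_lt_one)] with ε hε
      have a1 : ∀ᶠ n in atTop, Z n < M + ε := eventually_lt_of_limsup_lt (by linarith [hε.1])
      have a2 : ∀ᶠ n in atTop, c n < κ / 4 + ε := hc.eventually (gt_mem_nhds (by linarith [hε.1]))
      have a3 : ∃ᶠ n in atTop, M - ε < Z n :=
        frequently_lt_of_lt_limsup hbl.isCoboundedUnder_le (by linarith [hε.1])
      obtain ⟨N, hN⟩ := eventually_atTop.1 (a1.and a2)
      obtain ⟨n, hn, hn'⟩ := frequently_atTop.1 a3 (N + 1)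
      obtain ⟨j, rfl⟩ : ∃ j, n = j + 1 := ⟨n - 1, by omega⟩
      have b0 := hN j (by omega)
      have b1 := hN (j + 1) (by omega)
      have b2 := hN (j + 2) (by omega)
      have p0 := h1 j
      have p1 := h1 (j + 1)
      have p2 := h1 (j + 2)
      have e : c j * (Z (j + 1) + Z (j + 2)) * (Z j + Z (j + 1))
          ≤ (κ / 4 + ε) * (2 * (M + ε)) * (2 * (M + ε)) := by
        have := hε.1
        have : 0 ≤ (κ / 4 + ε) * (2 * (M + ε)) := mul_nonneg (by linarith) (by linarith)
        gcongr <;> linarith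
      have e' : (M - ε) ^ 2 ≤ Z (j + 1) ^ 2 := by
        have := hε.2
        gcongr
        linarith
      have := hZ j
      nlinarith
    have := ge_of_tendsto hlim hev
    simp only [add_zero, sub_zero] at this
    linarith
  have lower : κ / 4 * (2 * m) ^ 2 ≤ m ^ 2 - 1 := by
    have hlim : Tendsto (fun ε : ℝ => (m + ε) ^ 2 - 1 - (κ / 4 - ε) * (2 * (m - ε)) ^ 2) (𝓝[>] 0)
        (𝓝 ((m + 0) ^ 2 - 1 - (κ / 4 - 0) * (2 * (m - 0)) ^ 2)) :=
      (Continuous.tendsto (by fun_prop) 0).mono_left nhdsWithin_le_nhds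
    have hev : ∀ᶠ ε : ℝ in 𝓝[>] 0, 0 ≤ (m + ε) ^ 2 - 1 - (κ / 4 - ε) * (2 * (m - ε)) ^ 2 := by
      filter_upwards [Ioo_mem_nhdsGT (by positivity : (0 : ℝ) < κ / 4)] with ε hε
      have a1 : ∀ᶠ n in atTop, m - ε < Z n := eventually_lt_of_lt_liminf (by linarith [hε.1])
      have a2 : ∀ᶠ n in atTop, κ / 4 - ε < c n := hc.eventually (lt_mem_nhds (by linarith [hε.1]))
      have a3 : ∃ᶠ n in atTop, Z n < m + ε :=
        frequently_lt_of_liminf_lt hbu.isCoboundedUnder_ge (by linarith [hε.1])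
      obtain ⟨N, hN⟩ := eventually_atTop.1 (a1.and a2)
      obtain ⟨n, hn, hn'⟩ := frequently_atTop.1 a3 (N + 1)
      obtain ⟨j, rfl⟩ : ∃ j, n = j + 1 := ⟨n - 1, by omega⟩
      have b0 := hN j (by omega)
      have b1 := hN (j + 1) (by omega)
      have b2 := hN (j + 2) (by omega)
      have p0 := h1 j
      have p1 := h1 (j + 1)
      have p2 := h1 (j + 2)
      have hε1 := hε.1
      have hε2 := hε.2
      have e : (κ / 4 - ε) * (2 * (m - ε)) * (2 * (m - ε))
          ≤ c j * (Z (j + 1) + Z (j + 2)) * (Z j + Z (j + 1)) := by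
        have : 0 ≤ c j := by linarith [b0.2]
        have : 0 ≤ m - ε := by linarith
        gcongr <;> linarith
      have e' : Z (j + 1) ^ 2 ≤ (m + ε) ^ 2 := by
        gcongr
      have := hZ j
      nlinarith
    have := ge_of_tendsto hlim hev
    simp only [add_zero, sub_zero] at this
    linarith
  have hMle : M ≤ 1 / √(1 - κ) := by
    rw [le_div_iff₀ hs]
    refine le_of_sq_le_sq ?_ zero_le_one
    rw [mul_pow, hsq]
    linarith
  have hmge : 1 / √(1 - κ) ≤ m := by
    rw [div_le_iff₀ hs]
    refine le_of_sq_le_sq ?_ (by positivity)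
    rw [mul_pow, hsq]
    linarith
  exact tendsto_of_le_liminf_of_limsup_le hmge hMle hbu hbl

/-- Large-`n` asymptotics of `b` from the coupled difference system satisfied by the auxiliary
quantity `y` (bounded and nonnegative) and the recurrence coefficient `b`. -/
lemma tendsto_of_difference_system {α β κ K : ℝ} (hκ0 : 0 < κ) (hκ1 : κ < 1) {y b : ℕ → ℝ}
    (hy0 : ∀ n, 0 ≤ y n) (hyK : ∀ n, y n ≤ K)
    (h1 : ∀ n, y (n + 1) * (1 + y (n + 1))
      = κ * b n * (1 + y (n + 1) + y (n + 2)) * (1 + y n + y (n + 1)))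
    (h2 : ∀ n : ℕ, ((n : ℝ) + 2 - 2 * β * y (n + 1)) * ((n : ℝ) + 2 - 2 * β * y (n + 1) + 2 * α)
      = b n * (2 * ((n : ℝ) + 2) + (1 + 2 * α - 2 * β * (y (n + 1) + y (n + 2))))
        * (2 * ((n : ℝ) + 2) + (-1 + 2 * α - 2 * β * (y n + y (n + 1))))) :
    Tendsto b atTop (𝓝 (1 / 4)) ∧
    Tendsto (fun n : ℕ => ((n : ℝ) + 2) ^ 2 * (b n - 1 / 4)) atTop (𝓝 ((1 - 4 * α ^ 2) / 16)) ∧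
    Tendsto (fun n : ℕ => ((n : ℝ) + 2) ^ 3
        * (b n - 1 / 4 - (1 - 4 * α ^ 2) / (16 * ((n : ℝ) + 2) ^ 2))) atTop
      (𝓝 ((4 * α ^ 2 - 1) / 8 * (α + β - β / √(1 - κ)))) := by
  set N : ℕ → ℝ := fun n => (n : ℝ) + 2 with hN
  have hNpos : ∀ n, 0 < N n := fun n => by simp only [hN]; positivity
  have hNinv : Tendsto (fun n => (N n)⁻¹) atTop (𝓝 0) :=
    (tendsto_natCast_atTop_atTop.atTop_add tendsto_const_nhds).inv_tendsto_atTop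
  set d₁ : ℕ → ℝ := fun n => 1 + 2 * α - 2 * β * (y (n + 1) + y (n + 2)) with hd₁
  set d₂ : ℕ → ℝ := fun n => -1 + 2 * α - 2 * β * (y n + y (n + 1)) with hd₂
  set D : ℕ → ℝ := fun n => (2 * N n + d₁ n) * (2 * N n + d₂ n) with hD
  have hyinv : ∀ j, Tendsto (fun n => (N n)⁻¹ * y (n + j)) atTop (𝓝 0) := fun j =>
    hNinv.zero_mul_isBoundedUnder_le (isBoundedUnder_of ⟨K, fun n => by
      simpa [abs_of_nonneg (hy0 (n + j))] using hyK (n + j)⟩)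
  have hDlim : Tendsto (fun n => D n / N n ^ 2) atTop (𝓝 4) := by
    have t1 : Tendsto (fun n => 2 + ((N n)⁻¹ * (1 + 2 * α)
        - 2 * β * ((N n)⁻¹ * y (n + 1) + (N n)⁻¹ * y (n + 2)))) atTop (𝓝 2) := by
      simpa using ((hNinv.mul_const (1 + 2 * α)).sub
        (((hyinv 1).add (hyinv 2)).const_mul (2 * β))).const_add 2
    have t2 : Tendsto (fun n => 2 + ((N n)⁻¹ * (-1 + 2 * α)
        - 2 * β * ((N n)⁻¹ * y (n + 0) + (N n)⁻¹ * y (n + 1)))) atTop (𝓝 2) := by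
      simpa using ((hNinv.mul_const (-1 + 2 * α)).sub
        (((hyinv 0).add (hyinv 1)).const_mul (2 * β))).const_add 2
    have := t1.mul t2
    norm_num only at this
    refine this.congr fun n => ?_
    have := (hNpos n).ne'
    simp only [hD, hd₁, hd₂, add_zero]
    field_simp
  have hDinv : Tendsto (fun n => N n ^ 2 / D n) atTop (𝓝 (1 / 4)) := by
    have := hDlim.inv₀ (by norm_num)
    simpa using this
  have hDne : ∀ᶠ n in atTop, D n ≠ 0 := by
    filter_upwards [hDlim.eventually (lt_mem_nhds (by norm_num : (0 : ℝ) < 4))] with n hn h0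
    rw [h0, zero_div] at hn
    exact lt_irrefl _ hn
  have hb : Tendsto b atTop (𝓝 (1 / 4)) := by
    have t1 : Tendsto (fun n => 1 - 2 * β * ((N n)⁻¹ * y (n + 1))) atTop (𝓝 1) := by
      simpa using ((hyinv 1).const_mul (2 * β)).const_sub 1
    have t2 : Tendsto (fun n => 1 - 2 * β * ((N n)⁻¹ * y (n + 1)) + (N n)⁻¹ * (2 * α)) atTop
        (𝓝 1) := by
      simpa using t1.add (hNinv.mul_const (2 * α))
    have t3 := (t1.mul t2).mul hDinv
    rw [one_mul, one_mul] at t3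
    refine t3.congr' ?_
    filter_upwards [hDne] with n hn
    have hNn := (hNpos n).ne'
    have e : b n = ((N n - 2 * β * y (n + 1)) * (N n - 2 * β * y (n + 1) + 2 * α)) / D n := by
      rw [eq_div_iff hn, h2 n, hD]
      ring
    rw [e]
    field_simp
  set z := 1 / √(1 - κ) with hz
  have hs : 0 < √(1 - κ) := Real.sqrt_pos.2 (by linarith)
  have hz0 : 0 < z := by rw [hz]; positivity
  have hzsq : z ^ 2 * (1 - κ) = 1 := by
    have hsq : √(1 - κ) ^ 2 = 1 - κ := Real.sq_sqrt (by linarith)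
    rw [hz, div_pow, hsq]
    have : 1 - κ ≠ 0 := by linarith
    field_simp
  have hy : Tendsto y atTop (𝓝 ((z - 1) / 2)) := by
    have hZ : Tendsto (fun n => 1 + 2 * y n) atTop (𝓝 z) := by
      refine tendsto_of_quadratic_three_term (c := fun n => κ * b n) (K := 1 + 2 * K) hκ0 hκ1
        (fun n => by linarith [hy0 n]) (fun n => by linarith [hyK n]) ?_ fun n => ?_
      · simpa [div_eq_mul_inv] using hb.const_mul κ
      · linear_combination 4 * h1 n
    refine ((hZ.sub_const 1).div_const 2).congr fun n => ?_
    ring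
  set η : ℕ → ℝ := fun n => y n - (z - 1) / 2 with hη
  have hη0 : Tendsto η atTop (𝓝 0) := by simpa using hy.sub_const ((z - 1) / 2)
  have hηj : ∀ j, Tendsto (fun n => η (n + j)) atTop (𝓝 0) := fun j =>
    hη0.comp (tendsto_add_atTop_nat j)
  have hyη : ∀ n, y n = (z - 1) / 2 + η n := fun n => by simp only [hη]; ring
  set M : ℕ → ℝ := fun n => N n + α - 2 * β * y (n + 1) with hM
  set c₀ : ℝ := 1 / 4 - α ^ 2 with hc₀
  have he : ∀ n, (b n - 1 / 4) * D n = c₀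
      + (β * M n + β / 2 - β ^ 2 * (η (n + 2) - η (n + 1))) * η n
      + (-2 * β * M n + β ^ 2 * (η (n + 2) - η (n + 1))) * η (n + 1)
      + (β * M n - β / 2) * η (n + 2) := by
    intro n
    have := h2 n
    simp only [hD, hd₁, hd₂, hM, hc₀, hN, hyη] at this ⊢
    linear_combination -this
  have hMlim : Tendsto (fun n => M n / N n) atTop (𝓝 1) := by
    have : Tendsto (fun n => 1 + (N n)⁻¹ * α - 2 * β * ((N n)⁻¹ * y (n + 1))) atTop (𝓝 1) := by
      simpa using ((hNinv.mul_const α).const_add 1).sub ((hyinv 1).const_mul (2 * β))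
    refine this.congr fun n => ?_
    have := (hNpos n).ne'
    simp only [hM]
    field_simp
  have hD0 : Tendsto (fun n => 1 / D n) atTop (𝓝 0) := by
    have : Tendsto (fun n => (N n)⁻¹ * (N n)⁻¹ * (N n ^ 2 / D n)) atTop (𝓝 0) := by
      simpa using (hNinv.mul hNinv).mul hDinv
    refine this.congr fun n => ?_
    have := (hNpos n).ne'
    field_simp
  have hMD : Tendsto (fun n => M n / D n) atTop (𝓝 0) := by
    have : Tendsto (fun n => (N n)⁻¹ * (M n / N n) * (N n ^ 2 / D n)) atTop (𝓝 0) := by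
      simpa using (hNinv.mul hMlim).mul hDinv
    refine this.congr fun n => ?_
    have := (hNpos n).ne'
    field_simp
  obtain ⟨l, hl⟩ : ∃ l, Tendsto (fun n : ℕ => (n : ℝ) ^ 2 * η n) atTop (𝓝 l) := by
    set F : ℕ → ℝ := fun n => κ / z * (z + (η (n + 1) + η (n + 2))) * (z + (η n + η (n + 1)))
      with hF
    have hFlim : Tendsto F atTop (𝓝 (κ / z * (z + (0 + 0)) * (z + (0 + 0)))) :=
      ((((hηj 1).add (hηj 2)).const_add z).const_mul (κ / z)).mul
        (((hηj 0).add (hηj 1)).const_add z)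
    have hdiff : Tendsto (fun n => η (n + 2) - η (n + 1)) atTop (𝓝 0) := by
      simpa using (hηj 2).sub (hηj 1)
    have hsum : Tendsto (fun n => κ / (4 * z) * (η (n + 1) + η (n + 2))) atTop (𝓝 0) := by
      simpa using ((hηj 1).add (hηj 2)).const_mul (κ / (4 * z))
    refine ⟨_, tendsto_sq_mul_of_three_term (a := 1 - κ / 2) (b := κ / 4) (M := K + |(z - 1) / 2|)
      (A := fun n => F n * (c₀ * (1 / D n)))
      (B := fun n => F n * (β * (M n / D n) + β / 2 * (1 / D n)
        - β ^ 2 * (η (n + 2) - η (n + 1)) * (1 / D n)) + κ / (4 * z) * (η (n + 1) + η (n + 2)))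
      (C := fun n => F n * (-2 * β * (M n / D n)
        + β ^ 2 * (η (n + 2) - η (n + 1)) * (1 / D n)) + κ / (4 * z) * (η (n + 1) + η (n + 2))
        - η (n + 1) / z)
      (D := fun n => F n * (β * (M n / D n) - β / 2 * (1 / D n)))
      (by positivity) (by linarith) ?_
      (l := κ / z * (z + (0 + 0)) * (z + (0 + 0)) * (c₀ * (1 ^ 2 * (1 / 4)))) ?_ ?_ ?_ ?_ ?_⟩
    · intro n
      refine (abs_sub _ _).trans (add_le_add_left ?_ _)
      rw [abs_of_nonneg (hy0 n)]
      exact hyK n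
    · have r2 : Tendsto (fun n : ℕ => (n : ℝ) / N n) atTop (𝓝 1) := by
        simpa using tendsto_natCast_div_add 2
      refine (hFlim.mul (((r2.pow 2).mul hDinv).const_mul c₀)).congr fun n => ?_
      have := (hNpos n).ne'
      field_simp
    · simpa using (hFlim.mul (((hMD.const_mul β).add (hD0.const_mul (β / 2))).sub
        ((hdiff.const_mul (β ^ 2)).mul hD0))).add hsum
    · simpa using ((hFlim.mul ((hMD.const_mul (-2 * β)).add
        ((hdiff.const_mul (β ^ 2)).mul hD0))).add hsum).sub ((hηj 1).div_const z)
    · simpa using hFlim.mul ((hMD.const_mul β).sub (hD0.const_mul (β / 2)))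
    · filter_upwards [hDne] with n hn
      have e1 := h1 n
      have e2 : b n = 1 / 4 + (c₀
          + (β * M n + β / 2 - β ^ 2 * (η (n + 2) - η (n + 1))) * η n
          + (-2 * β * M n + β ^ 2 * (η (n + 2) - η (n + 1))) * η (n + 1)
          + (β * M n - β / 2) * η (n + 2)) / D n := by
        rw [← he n]
        field_simp
        ring
      set E := (c₀ + (β * M n + β / 2 - β ^ 2 * (η (n + 2) - η (n + 1))) * η n
          + (-2 * β * M n + β ^ 2 * (η (n + 2) - η (n + 1))) * η (n + 1)
          + (β * M n - β / 2) * η (n + 2)) / D n with hE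
      have e3 : z * ((1 - κ / 2) * η (n + 1) - κ / 4 * (η n + η (n + 2)))
          = κ * (z + (η (n + 1) + η (n + 2))) * (z + (η n + η (n + 1))) * E
            + κ / 4 * (η (n + 1) + η (n + 2)) * (η n + η (n + 1)) - η (n + 1) ^ 2 := by
        rw [e2] at e1
        simp only [hyη] at e1
        linear_combination e1 - hzsq / 4
      have e4 : (1 - κ / 2) * η (n + 1) - κ / 4 * (η n + η (n + 2))
          = F n * E + κ / (4 * z) * (η (n + 1) + η (n + 2)) * (η n + η (n + 1))
            - η (n + 1) / z * η (n + 1) := by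
        rw [eq_comm, ← mul_right_inj' hz0.ne', e3]
        simp only [hF]
        field_simp
      rw [e4, hE]
      field_simp
      ring
  have hlj : ∀ j ≤ 2, Tendsto (fun n => N n ^ 2 * η (n + j)) atTop (𝓝 l) := by
    intro j hj
    have q1 : Tendsto (fun n : ℕ => 1 - (N n)⁻¹ * (2 - j)) atTop (𝓝 1) := by
      simpa using (hNinv.mul_const ((2 : ℝ) - j)).const_sub 1
    have q2 := ((q1.inv₀ one_ne_zero).pow 2).mul (hl.comp (tendsto_add_atTop_nat j))
    rw [inv_one, one_pow, one_mul] at q2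
    refine q2.congr' ?_
    filter_upwards [eventually_ge_atTop 1] with n hn
    have hn1 : (1 : ℝ) ≤ n := by exact_mod_cast hn
    have a1 : (n : ℝ) + j ≠ 0 := by positivity
    have a2 : 1 - (N n)⁻¹ * (2 - j) = ((n : ℝ) + j) / N n := by
      have := (hNpos n).ne'
      field_simp
      simp only [hN]
      ring
    simp only [Function.comp_apply, a2, Nat.cast_add]
    have := (hNpos n).ne'
    field_simp
  have hNη : ∀ j ≤ 2, Tendsto (fun n => N n * η (n + j)) atTop (𝓝 0) := by
    intro j hj
    have := hNinv.mul (hlj j hj)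
    rw [zero_mul] at this
    refine this.congr fun n => ?_
    have := (hNpos n).ne'
    field_simp
  have hrem : Tendsto (fun n => N n * ((b n - 1 / 4) * D n - c₀)) atTop (𝓝 0) := by
    have t1 : Tendsto (fun n => β * (M n / N n) * (N n ^ 2 * η (n + 0) - 2 * (N n ^ 2 * η (n + 1))
        + N n ^ 2 * η (n + 2))) atTop (𝓝 0) := by
      have := (hMlim.const_mul β).mul (((hlj 0 (by norm_num)).sub
        ((hlj 1 (by norm_num)).const_mul 2)).add (hlj 2 le_rfl))
      have e : l - 2 * l + l = 0 := by ring
      rwa [e, mul_zero] at this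
    have t2 : Tendsto (fun n => β / 2 * (N n * η (n + 0) - N n * η (n + 2))) atTop (𝓝 0) := by
      simpa using ((hNη 0 (by norm_num)).sub (hNη 2 le_rfl)).const_mul (β / 2)
    have t3 : Tendsto (fun n => β ^ 2 * (η (n + 2) - η (n + 1))
        * (N n * η (n + 1) - N n * η (n + 0))) atTop (𝓝 0) := by
      simpa using ((((hηj 2).sub (hηj 1)).const_mul (β ^ 2))).mul
        ((hNη 1 (by norm_num)).sub (hNη 0 (by norm_num)))
    have t4 := (t1.add t2).add t3
    rw [add_zero, add_zero] at t4
    refine t4.congr fun n => ?_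
    rw [he n]
    have := (hNpos n).ne'
    simp only [add_zero]
    field_simp
    ring
  have hrem' : Tendsto (fun n => (b n - 1 / 4) * D n) atTop (𝓝 c₀) := by
    have := (hNinv.mul hrem).add_const c₀
    rw [zero_mul, zero_add] at this
    refine this.congr fun n => ?_
    have := (hNpos n).ne'
    field_simp
    ring
  refine ⟨hb, ?_, ?_⟩
  · have := hrem'.mul hDinv
    have e : c₀ * (1 / 4) = (1 - 4 * α ^ 2) / 16 := by rw [hc₀]; ring
    rw [e] at this
    refine this.congr' ?_
    filter_upwards [hDne] with n hn
    field_simp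
    simp only [hN]
  · have hyj : ∀ j, Tendsto (fun n => y (n + j)) atTop (𝓝 ((z - 1) / 2)) := fun j =>
      hy.comp (tendsto_add_atTop_nat j)
    have hd₁lim : Tendsto d₁ atTop (𝓝 (1 + 2 * α - 2 * β * ((z - 1) / 2 + (z - 1) / 2))) :=
      (((hyj 1).add (hyj 2)).const_mul (2 * β)).const_sub _
    have hd₂lim : Tendsto d₂ atTop (𝓝 (-1 + 2 * α - 2 * β * ((z - 1) / 2 + (z - 1) / 2))) :=
      (((hyj 0).add (hyj 1)).const_mul (2 * β)).const_sub _
    have t1 := (hrem.mul hDinv).add ((hDinv.const_mul c₀).mul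
      (((hd₁lim.add hd₂lim).div_const (-2)).sub
        (((hd₁lim.mul hd₂lim).div_const 4).mul hNinv)))
    have e : β / √(1 - κ) = β * z := by rw [hz]; ring
    rw [e]
    convert t1.congr' ?_ using 2
    · rw [hc₀]
      ring
    · filter_upwards [hDne] with n hn
      have hNn := (hNpos n).ne'
      have hDn : D n = 4 * N n ^ 2 + 2 * N n * (d₁ n + d₂ n) + d₁ n * d₂ n := by
        simp only [hD]
        ring
      have e2 : (1 - 4 * α ^ 2) / (16 * N n ^ 2) = c₀ / (4 * N n ^ 2) := by
        rw [hc₀]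
        field_simp
        ring
      rw [e2]
      have e3 : (d₁ n + d₂ n) / (-2) - d₁ n * d₂ n / 4 * (N n)⁻¹
          = (4 * N n ^ 2 - D n) / (4 * N n) := by
        rw [hDn]
        field_simp
        ring
      rw [e3]
      field_simp
      ring

section OrthogonalPolynomials

variable {L V : ℝ[X] →ₗ[ℝ] ℝ} {P : ℕ → ℝ[X]} {h b : ℕ → ℝ} {c μ : ℝ}

lemma coeff_self_eq_one (hm : ∀ n, (P n).Monic) (hd : ∀ n, (P n).natDegree = n) (n : ℕ) :
    (P n).coeff n = 1 := by
  have := (hm n).coeff_natDegree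
  rwa [hd n] at this

lemma degree_sub_coeff_mul_lt (hm : ∀ n, (P n).Monic) (hd : ∀ n, (P n).natDegree = n) {n : ℕ}
    {g : ℝ[X]} (hg : g.degree < (n + 1 : ℕ)) : (g - C (g.coeff n) * P n).degree < n := by
  rw [degree_lt_iff_coeff_zero]
  intro k hk
  rw [coeff_sub, coeff_C_mul]
  rcases hk.eq_or_lt with rfl | hlt
  · rw [coeff_self_eq_one hm hd, mul_one, sub_self]
  · rw [(degree_lt_iff_coeff_zero g (n + 1)).1 hg k hlt,
      coeff_eq_zero_of_natDegree_lt (p := P n) (by rwa [hd n]), mul_zero, sub_zero]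

lemma orthogonal_of_degree_lt (hm : ∀ n, (P n).Monic) (hd : ∀ n, (P n).natDegree = n)
    (ho : ∀ m n, L (P m * P n) = if m = n then h n else 0) {n : ℕ} {g : ℝ[X]}
    (hg : g.degree < n) : L (P n * g) = 0 := by
  have key : ∀ m ≤ n, ∀ g : ℝ[X], g.degree < m → L (P n * g) = 0 := by
    intro m
    induction m with
    | zero =>
      intro _ g hg
      have : g = 0 := by simpa using hg
      simp [this]
    | succ m ih =>
      intro hmn g hg
      have h1 := degree_sub_coeff_mul_lt hm hd hg
      have h2 := ih (by omega) _ h1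
      have h3 : P n * g = P n * (g - C (g.coeff m) * P m) + g.coeff m • (P n * P m) := by
        rw [smul_eq_C_mul]
        ring
      rw [h3, map_add, h2, map_smul, ho, if_neg (by omega), smul_zero, add_zero]
  exact key n le_rfl g hg

lemma functional_mul_of_degree_le (hm : ∀ n, (P n).Monic) (hd : ∀ n, (P n).natDegree = n)
    (ho : ∀ m n, L (P m * P n) = if m = n then h n else 0) {n : ℕ} {g : ℝ[X]}
    (hg : g.degree < (n + 1 : ℕ)) : L (P n * g) = g.coeff n * h n := by
  have h2 := orthogonal_of_degree_lt hm hd ho (degree_sub_coeff_mul_lt hm hd hg)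
  have h3 : P n * g = P n * (g - C (g.coeff n) * P n) + g.coeff n • (P n * P n) := by
    rw [smul_eq_C_mul]
    ring
  rw [h3, map_add, h2, map_smul, ho, if_pos rfl, zero_add, smul_eq_mul]

/-- Splitting off the value at `c`: `P (m+1) = P (m+1)(c) - (c - X) g` with `g` monic of
degree `m`. -/
lemma exists_quotient (hm : ∀ n, (P n).Monic) (hd : ∀ n, (P n).natDegree = n) (c : ℝ) (m : ℕ) :
    ∃ g : ℝ[X], P (m + 1) = C ((P (m + 1)).eval c) - (C c - X) * g ∧
      g.degree < (m + 1 : ℕ) ∧ g.coeff m = 1 := by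
  refine ⟨(P (m + 1)) /ₘ (X - C c), ?_, ?_, ?_⟩
  · have := modByMonic_add_div (P (m + 1)) (X - C c)
    rw [modByMonic_X_sub_C_eq_C_eval] at this
    linear_combination -this
  all_goals
    have hnd : ((P (m + 1)) /ₘ (X - C c)).natDegree = m := by
      rw [natDegree_divByMonic _ (monic_X_sub_C c), hd, natDegree_X_sub_C]
      rfl
  · exact lt_of_le_of_lt degree_le_natDegree (by rw [hnd]; exact_mod_cast Nat.lt_succ_self m)
  · have hl : ((P (m + 1)) /ₘ (X - C c)).leadingCoeff = 1 := by
      rw [leadingCoeff_divByMonic_X_sub_C (P (m + 1)) (by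
        rw [degree_eq_natDegree (hm _).ne_zero, hd]
        exact_mod_cast Nat.succ_ne_zero m)]
      exact hm _
    rw [leadingCoeff, hnd] at hl
    exact hl

/-- The quadratic identity between the values of a Stieltjes-type functional `V` (formally
`f ↦ μ L (f / (c - X))`) on products of consecutive orthogonal polynomials. -/
lemma stieltjes_product_identity (hm : ∀ n, (P n).Monic) (hd : ∀ n, (P n).natDegree = n)
    (ho : ∀ m n, L (P m * P n) = if m = n then h n else 0)
    (hV : ∀ g, V ((C c - X) * g) = μ * L g) (n : ℕ) :
    V (P (n + 1) * P n) * (V (P (n + 1) * P n) + μ * h n)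
      = V (P (n + 1) * P (n + 1)) * V (P n * P n) := by
  have diag : ∀ n, V (P n * P n) = (P n).eval c * V (P n) := by
    intro n
    rcases n with _ | m
    · have h1 : P 0 = 1 := (hm 0).natDegree_eq_zero.1 (hd 0)
      simp [h1]
    · obtain ⟨g, hg, hgd, -⟩ := exists_quotient hm hd c m
      have e : P (m + 1) * P (m + 1)
          = (P (m + 1)).eval c • P (m + 1) - (C c - X) * (P (m + 1) * g) := by
        rw [smul_eq_C_mul]
        linear_combination P (m + 1) * hg
      rw [e, map_sub, map_smul, hV, orthogonal_of_degree_lt hm hd ho hgd, smul_eq_mul]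
      ring
  have up : V (P (n + 1) * P n) = (P n).eval c * V (P (n + 1)) := by
    rcases n with _ | m
    · have h1 : P 0 = 1 := (hm 0).natDegree_eq_zero.1 (hd 0)
      simp [h1]
    · obtain ⟨g, hg, hgd, -⟩ := exists_quotient hm hd c m
      have e : P (m + 1 + 1) * P (m + 1)
          = (P (m + 1)).eval c • P (m + 1 + 1) - (C c - X) * (P (m + 1 + 1) * g) := by
        rw [smul_eq_C_mul]
        linear_combination P (m + 1 + 1) * hg
      rw [e, map_sub, map_smul, hV, orthogonal_of_degree_lt hm hd ho
        (hgd.trans (by exact_mod_cast Nat.lt_succ_self _)), smul_eq_mul]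
      ring
  have down : V (P (n + 1) * P n) + μ * h n = (P (n + 1)).eval c * V (P n) := by
    obtain ⟨g, hg, hgd, hgc⟩ := exists_quotient hm hd c n
    have e : P (n + 1) * P n = (P (n + 1)).eval c • P n - (C c - X) * (P n * g) := by
      rw [smul_eq_C_mul]
      linear_combination P n * hg
    rw [e, map_sub, map_smul, hV, functional_mul_of_degree_le hm hd ho hgd, hgc, smul_eq_mul]
    ring
  rw [down, up, diag, diag]
  ring

lemma stieltjes_recurrence (ho : ∀ m n, L (P m * P n) = if m = n then h n else 0)
    (hr : ∀ n, X * P (n + 1) = P (n + 2) + C (b (n + 1)) * P n)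
    (hV : ∀ g, V ((C c - X) * g) = μ * L g) (n : ℕ) :
    c * V (P (n + 1) * P (n + 1))
      = V (P (n + 2) * P (n + 1)) + b (n + 1) * V (P (n + 1) * P n) + μ * h (n + 1) := by
  have e : c • (P (n + 1) * P (n + 1)) = P (n + 2) * P (n + 1)
      + b (n + 1) • (P (n + 1) * P n) + (C c - X) * (P (n + 1) * P (n + 1)) := by
    rw [smul_eq_C_mul, smul_eq_C_mul]
    linear_combination P (n + 1) * hr n
  have := congrArg V e
  rw [map_add, map_add, map_smul, map_smul, hV, ho, if_pos rfl, smul_eq_mul, smul_eq_mul] at this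
  exact this

lemma norm_succ_eq (hm : ∀ n, (P n).Monic) (hd : ∀ n, (P n).natDegree = n)
    (ho : ∀ m n, L (P m * P n) = if m = n then h n else 0)
    (hr : ∀ n, X * P (n + 1) = P (n + 2) + C (b (n + 1)) * P n) (n : ℕ) :
    h (n + 1) = b (n + 1) * h n := by
  have hnd : (X * P n).natDegree = n + 1 := by
    rw [natDegree_X_mul (hm n).ne_zero, hd]
  have h1 : L (P (n + 1) * (X * P n)) = h (n + 1) := by
    rw [functional_mul_of_degree_le hm hd ho, coeff_X_mul]
    · rw [coeff_self_eq_one hm hd, one_mul]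
    · exact lt_of_le_of_lt degree_le_natDegree (by rw [hnd]; exact_mod_cast Nat.lt_succ_self _)
  have h2 : P (n + 1) * (X * P n) = P (n + 2) * P n + b (n + 1) • (P n * P n) := by
    rw [smul_eq_C_mul]
    linear_combination P n * hr n
  rw [← h1, h2, map_add, map_smul, ho, ho, if_neg (by omega), if_pos rfl, smul_eq_mul, zero_add]

lemma functional_derivative_mul (hm : ∀ n, (P n).Monic) (hd : ∀ n, (P n).natDegree = n)
    (ho : ∀ m n, L (P m * P n) = if m = n then h n else 0) (n : ℕ) :
    L (derivative (P (n + 1) * P n)) = (n + 1) * h n := by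
  have h1 : (derivative (P n)).degree < (n + 1 : ℕ) := by
    refine lt_of_le_of_lt (degree_derivative_le) ?_
    rw [degree_eq_natDegree (hm n).ne_zero, hd]
    exact_mod_cast Nat.lt_succ_self n
  have h2 : (derivative (P (n + 1))).degree < (n + 1 : ℕ) := by
    have := degree_derivative_lt (hm (n + 1)).ne_zero
    rwa [degree_eq_natDegree (hm (n + 1)).ne_zero, hd] at this
  rw [derivative_mul, map_add, orthogonal_of_degree_lt hm hd ho h1, mul_comm,
    functional_mul_of_degree_le hm hd ho h2, coeff_derivative, coeff_self_eq_one hm hd]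
  ring

lemma comp_neg_X_eq (hm : ∀ n, (P n).Monic) (hd : ∀ n, (P n).natDegree = n)
    (ho : ∀ m n, L (P m * P n) = if m = n then h n else 0) (hL : L X = 0) (h0 : h 0 ≠ 0)
    (hr : ∀ n, X * P (n + 1) = P (n + 2) + C (b (n + 1)) * P n) (n : ℕ) :
    (P n).comp (-X) = (-1) ^ n * P n := by
  have p0 : P 0 = 1 := (hm 0).natDegree_eq_zero.1 (hd 0)
  have p1 : P 1 = X := by
    have e : P 1 = X + C ((P 1).coeff 0) := by
      have := eq_X_add_C_of_natDegree_le_one (hd 1).le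
      rwa [coeff_self_eq_one hm hd, C_1, one_mul] at this
    have h1 := ho 1 0
    have h2 := ho 0 0
    rw [p0, mul_one] at h1 h2
    rw [e, map_add, hL, zero_add, if_neg (by norm_num), ← mul_one (C _), ← smul_eq_C_mul,
      map_smul, h2, if_pos rfl, smul_eq_mul] at h1
    rw [e, (mul_eq_zero.1 h1).resolve_right h0, C_0, add_zero]
  have key : (P n).comp (-X) = (-1) ^ n * P n ∧
      (P (n + 1)).comp (-X) = (-1) ^ (n + 1) * P (n + 1) := by
    induction n with
    | zero => simp [p0, p1]
    | succ n ih =>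
      refine ⟨ih.2, ?_⟩
      have e : P (n + 2) = X * P (n + 1) - C (b (n + 1)) * P n := by
        linear_combination -hr n
      rw [e, sub_comp, mul_comp, mul_comp, ih.1, ih.2, X_comp, C_comp]
      ring
  exact key.1

end OrthogonalPolynomials

/-- Integration of a polynomial over `[-1, 1]` against a fixed integrable density. -/
noncomputable def integralFunctional (u : ℝ → ℝ) (hu : IntervalIntegrable u volume (-1) 1) :
    ℝ[X] →ₗ[ℝ] ℝ where
  toFun f := ∫ x in (-1 : ℝ)..1, f.eval x * u x
  map_add' f g := by
    simp only [eval_add, add_mul]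
    exact intervalIntegral.integral_add (hu.continuousOn_mul f.continuous.continuousOn)
      (hu.continuousOn_mul g.continuous.continuousOn)
  map_smul' r f := by
    simp only [eval_smul, smul_eq_mul, mul_assoc, RingHom.id_apply]
    exact intervalIntegral.integral_const_mul r _

section Functional

variable {u w : ℝ → ℝ} {hu : IntervalIntegrable u volume (-1) 1}
  {hw : IntervalIntegrable w volume (-1) 1} {c : ℝ}

lemma integralFunctional_apply (f : ℝ[X]) :
    integralFunctional u hu f = ∫ x in (-1 : ℝ)..1, f.eval x * u x := rfl

lemma intervalIntegrable_eval_mul (hu : IntervalIntegrable u volume (-1) 1) (f : ℝ[X]) :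
    IntervalIntegrable (fun x => f.eval x * u x) volume (-1) 1 :=
  hu.continuousOn_mul f.continuous.continuousOn

lemma intervalIntegrable_div_sub (hw : IntervalIntegrable w volume (-1) 1) (hc : 1 < c) :
    IntervalIntegrable (fun x => w x / (c - x)) volume (-1) 1 := by
  simp only [div_eq_mul_inv]
  refine hw.mul_continuousOn (ContinuousOn.inv₀ (by fun_prop) fun x hx => ?_)
  rw [Set.uIcc_of_le (by norm_num)] at hx
  linarith [hx.2]

lemma intervalIntegrable_div_add (hw : IntervalIntegrable w volume (-1) 1) (hc : 1 < c) :
    IntervalIntegrable (fun x => w x / (c + x)) volume (-1) 1 := by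
  simp only [div_eq_mul_inv]
  refine hw.mul_continuousOn (ContinuousOn.inv₀ (by fun_prop) fun x hx => ?_)
  rw [Set.uIcc_of_le (by norm_num)] at hx
  linarith [hx.1]

lemma integralFunctional_mono {hv : IntervalIntegrable w volume (-1) 1} {f g : ℝ[X]}
    (hfg : ∀ x ∈ Set.Icc (-1 : ℝ) 1, f.eval x * u x ≤ g.eval x * w x) :
    integralFunctional u hu f ≤ integralFunctional w hv g :=
  intervalIntegral.integral_mono_on (by norm_num) (intervalIntegrable_eval_mul hu f)
    (intervalIntegrable_eval_mul hv g) hfg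

lemma integralFunctional_comp_neg (hev : ∀ x, u (-x) = w x) (f : ℝ[X]) :
    integralFunctional w hw (f.comp (-X)) = integralFunctional u hu f := by
  simp only [integralFunctional_apply]
  have := intervalIntegral.integral_comp_neg (a := -1) (b := 1) (fun x => f.eval x * u x)
  rw [neg_neg] at this
  rw [← this]
  simp [hev, eval_comp]

lemma integralFunctional_div_sub (hc : 1 < c) (g : ℝ[X]) :
    integralFunctional _ (intervalIntegrable_div_sub hw hc) ((C c - X) * g)
      = 1 * integralFunctional w hw g := by
  rw [one_mul]
  refine intervalIntegral.integral_congr fun x hx => ?_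
  rw [Set.uIcc_of_le (by norm_num)] at hx
  have : c - x ≠ 0 := by linarith [hx.2]
  simp only [eval_mul, eval_sub, eval_C, eval_X]
  field_simp

end Functional

/-- Integration by parts against the weight `(1 - x²)^α (1 - k² x²)^β`, whose logarithmic
derivative has poles at `±1` and `±c` with `c = 1 / k`. -/
lemma integralFunctional_derivative {α β k2 c : ℝ} (hα : -1 < α) (hc : 1 < c)
    (hck : k2 * c ^ 2 = 1) {w : ℝ → ℝ}
    (hw : ∀ x : ℝ, w x = (1 - x ^ 2) ^ α * (1 - k2 * x ^ 2) ^ β)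
    (hi : IntervalIntegrable w volume (-1) 1) (g : ℝ[X]) :
    integralFunctional w hi (derivative ((1 - X ^ 2) * g))
      - β * (integralFunctional _ (intervalIntegrable_div_sub hi hc) ((1 - X ^ 2) * g)
        - integralFunctional _ (intervalIntegrable_div_add hi hc) ((1 - X ^ 2) * g))
      = 2 * α * integralFunctional w hi (X * g) := by
  have hk : 0 < k2 := by
    by_contra h0
    nlinarith [sq_nonneg c]
  have hk1 : k2 < 1 := by nlinarith
  have hpos : ∀ x ∈ Set.Icc (-1 : ℝ) 1, 0 < 1 - k2 * x ^ 2 := fun x hx => by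
    have : x ^ 2 ≤ 1 := by nlinarith [hx.1, hx.2]
    nlinarith
  have i1 := intervalIntegrable_eval_mul hi (derivative ((1 - X ^ 2) * g))
  have i2 := intervalIntegrable_eval_mul (intervalIntegrable_div_sub hi hc) ((1 - X ^ 2) * g)
  have i3 := intervalIntegrable_eval_mul (intervalIntegrable_div_add hi hc) ((1 - X ^ 2) * g)
  have i4 := intervalIntegrable_eval_mul hi (X * g)
  have hsum := (i1.sub ((i2.sub i3).const_mul β)).sub (i4.const_mul (2 * α))
  have ftc := intervalIntegral.integral_eq_sub_of_hasDerivAt_of_le (by norm_num : (-1 : ℝ) ≤ 1)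
    (f := fun x => (1 - x ^ 2) ^ (α + 1) * (1 - k2 * x ^ 2) ^ β * g.eval x) ?_ ?_ hsum
  · rw [intervalIntegral.integral_sub (i1.sub ((i2.sub i3).const_mul β)) (i4.const_mul (2 * α)),
      intervalIntegral.integral_sub i1 ((i2.sub i3).const_mul β),
      intervalIntegral.integral_const_mul, intervalIntegral.integral_const_mul,
      intervalIntegral.integral_sub i2 i3] at ftc
    have hα1 : α + 1 ≠ 0 := by linarith
    norm_num [Real.zero_rpow hα1] at ftc
    simp only [integralFunctional_apply, eval_mul, eval_sub, eval_one, eval_pow, eval_X]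
    norm_num
    linarith
  · refine ContinuousOn.mul (ContinuousOn.mul ?_ ?_) g.continuous.continuousOn
    · exact ContinuousOn.rpow_const (by fun_prop) fun x _ => Or.inr (by linarith)
    · exact ContinuousOn.rpow_const (by fun_prop) fun x hx => Or.inl (hpos x hx).ne'
  · intro x hx
    have p1 : 0 < 1 - x ^ 2 := by nlinarith [hx.1, hx.2]
    have p2 := hpos x ⟨hx.1.le, hx.2.le⟩
    have d1 : HasDerivAt (fun x : ℝ => 1 - x ^ 2) (-(2 * x)) x := by
      simpa using (hasDerivAt_pow 2 x).const_sub 1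
    have d2 : HasDerivAt (fun x : ℝ => 1 - k2 * x ^ 2) (-(k2 * (2 * x))) x := by
      simpa using ((hasDerivAt_pow 2 x).const_mul k2).const_sub 1
    have d3 := (((d1.rpow_const (p := α + 1) (Or.inl p1.ne')).mul
      (d2.rpow_const (p := β) (Or.inl p2.ne'))).mul (g.hasDerivAt x))
    refine d3.congr_deriv ?_
    have n1 : c - x ≠ 0 := by linarith [hx.2]
    have n2 : c + x ≠ 0 := by linarith [hx.1]
    have r1 : (1 - x ^ 2) ^ (α + 1) = (1 - x ^ 2) ^ α * (1 - x ^ 2) := Real.rpow_add_one p1.ne' α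
    have r2 : (1 - k2 * x ^ 2) ^ (β - 1) = (1 - k2 * x ^ 2) ^ β / (1 - k2 * x ^ 2) :=
      Real.rpow_sub_one p2.ne' β
    have r3 : k2 * (2 * x) / (1 - k2 * x ^ 2) = 1 / (c - x) - 1 / (c + x) := by
      have : 1 - k2 * x ^ 2 = k2 * ((c - x) * (c + x)) := by linear_combination -hck
      rw [this]
      field_simp
      ring
    simp only [Pi.mul_apply, derivative_mul, derivative_sub, derivative_one, derivative_X_pow,
      eval_mul, eval_sub, eval_add, eval_one, eval_pow, eval_X, eval_C, hw, r1, r2,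
      add_sub_cancel_right]
    push_cast
    simp only [eval_zero, pow_one]
    linear_combination (-(1 - x ^ 2) ^ α * (1 - x ^ 2) * β * (1 - k2 * x ^ 2) ^ β * g.eval x) * r3

section DifferenceSystem

variable {L V : ℝ[X] →ₗ[ℝ] ℝ} {P : ℕ → ℝ[X]} {h b : ℕ → ℝ} {c μ : ℝ}

/-- The recurrence and product identities, normalised by the squared norms. -/
lemma stieltjes_normalized (hm : ∀ n, (P n).Monic) (hd : ∀ n, (P n).natDegree = n)
    (hpos : ∀ n, 0 < h n) (ho : ∀ m n, L (P m * P n) = if m = n then h n else 0)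
    (hr : ∀ n, X * P (n + 1) = P (n + 2) + C (b (n + 1)) * P n)
    (hV : ∀ g, V ((C c - X) * g) = μ * L g) {v : ℕ → ℝ}
    (hv : ∀ n, V (P (n + 1) * P n) = h n * v n) (n : ℕ) :
    c * V (P (n + 1) * P (n + 1)) = h (n + 1) * (v (n + 1) + v n + μ) ∧
    c ^ 2 * (v (n + 1) * (v (n + 1) + μ))
      = b (n + 2) * (v (n + 2) + v (n + 1) + μ) * (v (n + 1) + v n + μ) := by
  have hdiag : ∀ n, c * V (P (n + 1) * P (n + 1)) = h (n + 1) * (v (n + 1) + v n + μ) := by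
    intro n
    rw [stieltjes_recurrence ho hr hV n, hv, hv]
    linear_combination (-v n) * norm_succ_eq hm hd ho hr n
  refine ⟨hdiag n, ?_⟩
  have hprod := stieltjes_product_identity hm hd ho hV (n + 1)
  rw [hv] at hprod
  have e1 := hdiag n
  have e2 := hdiag (n + 1)
  rw [norm_succ_eq hm hd ho hr (n + 1)] at e2
  have hne : h (n + 1) ^ 2 ≠ 0 := pow_ne_zero _ (hpos _).ne'
  refine mul_left_cancel₀ hne ?_
  linear_combination c ^ 2 * hprod + (c * V (P (n + 1) * P (n + 1))) * e2
    + (b (n + 2) * h (n + 1) * (v (n + 2) + v (n + 1) + μ)) * e1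

/-- For a functional that is nonnegative on squares the normalised off-diagonal values are
nonnegative. -/
lemma stieltjes_nonneg (hm : ∀ n, (P n).Monic) (hd : ∀ n, (P n).natDegree = n)
    (hpos : ∀ n, 0 < h n) (ho : ∀ m n, L (P m * P n) = if m = n then h n else 0)
    (hV : ∀ g, V ((C c - X) * g) = 1 * L g) (hsq : ∀ g, 0 ≤ V (g * g)) (n : ℕ) :
    0 ≤ V (P (n + 1) * P n) := by
  have hprod := stieltjes_product_identity hm hd ho hV n
  have hdisc : discrim (V (P n * P n)) (2 * V (P (n + 1) * P n))
      (V (P (n + 1) * P (n + 1))) ≤ 0 := by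
    refine discrim_le_zero fun t => ?_
    have e : (P (n + 1) + t • P n) * (P (n + 1) + t • P n)
        = (t * t) • (P n * P n) + (2 * t) • (P (n + 1) * P n) + P (n + 1) * P (n + 1) := by
      simp only [smul_eq_C_mul, C_mul, C_ofNat]
      ring
    have := hsq (P (n + 1) + t • P n)
    rw [e] at this
    simp only [map_add, map_smul, smul_eq_mul] at this
    linarith
  rw [discrim] at hdisc
  nlinarith [hpos n]

end DifferenceSystem

section Weight

variable {α β k2 c : ℝ} {w : ℝ → ℝ}

/-- Applying integration by parts to `(1 + X) f` gives a functional with the Stieltjes property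
at the endpoint `1`. -/
lemma exists_endpoint_functional (hα : -1 < α) (hc : 1 < c) (hck : k2 * c ^ 2 = 1)
    (hw : ∀ x : ℝ, w x = (1 - x ^ 2) ^ α * (1 - k2 * x ^ 2) ^ β)
    (hi : IntervalIntegrable w volume (-1) 1) :
    ∃ V : ℝ[X] →ₗ[ℝ] ℝ, (∀ g, V ((C 1 - X) * g) = 2 * α * integralFunctional w hi g) ∧
      ∀ f : ℝ[X], f.comp (-X) = -f → V f = integralFunctional w hi (derivative f)
        - 2 * β * integralFunctional _ (intervalIntegrable_div_sub hi hc) f := by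
  set L := integralFunctional w hi with hL
  set G := integralFunctional _ (intervalIntegrable_div_sub hi hc) with hG
  set H := integralFunctional _ (intervalIntegrable_div_add hi hc) with hH
  have hev : ∀ x, w (-x) = w x := fun x => by rw [hw, hw, neg_sq]
  have hLneg : ∀ f : ℝ[X], L (f.comp (-X)) = L f := integralFunctional_comp_neg hev
  have hHneg : ∀ f : ℝ[X], H (f.comp (-X)) = G f :=
    integralFunctional_comp_neg fun x => by rw [hev, sub_neg_eq_add]
  let T : ℝ[X] →ₗ[ℝ] ℝ[X] := LinearMap.mulLeft ℝ (1 + X)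
  refine ⟨L ∘ₗ derivative ∘ₗ T - β • ((G - H) ∘ₗ T) + (2 * α) • L, fun g => ?_, fun f hf => ?_⟩
  · have e : (1 + X) * ((C 1 - X) * g) = (1 - X ^ 2) * g := by
      rw [C_1]; ring
    have key := integralFunctional_derivative hα hc hck hw hi g
    simp only [LinearMap.add_apply, LinearMap.sub_apply, LinearMap.smul_apply,
      LinearMap.comp_apply, T, LinearMap.mulLeft_apply, e, smul_eq_mul]
    rw [key, C_1, sub_mul, one_mul, map_sub]
    ring
  · have hXf : (X * f).comp (-X) = X * f := by rw [mul_comp, X_comp, hf, neg_mul_neg]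
    have hLf : L f = 0 := by
      have := hLneg f
      rw [hf, map_neg] at this
      linarith
    have hHf : H f = -G f := by
      rw [← hHneg f, hf, map_neg, neg_neg]
    have hHXf : H (X * f) = G (X * f) := by rw [← hHneg, hXf]
    have hLd : L (derivative (X * f)) = 0 := by
      have h1 := hLneg (derivative (X * f))
      have h2 := derivative_comp (X * f) (-X)
      rw [hXf, derivative_neg, derivative_X, neg_mul, one_mul] at h2
      have h3 := congrArg L h2
      rw [map_neg, h1] at h3
      linarith
    simp only [LinearMap.add_apply, LinearMap.sub_apply, LinearMap.smul_apply,
      LinearMap.comp_apply, T, LinearMap.mulLeft_apply, add_mul, one_mul, map_add,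
      smul_eq_mul, hLf, hHf, hHXf, hLd]
    ring

end Weight

/-- Large `n` asymptotics of the recurrence coefficients:
`β_n → 1/4`, `n²(β_n − 1/4) → (1−4α²)/16`, and
`n³(β_n − 1/4 − (1−4α²)/(16n²)) → ((4α²−1)/8)(α + β − β/√(1−k²))`. -/
theorem stmt_18
    (α β k2 : ℝ) (hα : -1 < α) (hk2 : k2 ∈ Set.Ioo (0:ℝ) 1)
    (w : ℝ → ℝ)
    (hw : ∀ x : ℝ, w x = (1 - x ^ 2) ^ α * (1 - k2 * x ^ 2) ^ β)
    (P : ℕ → Polynomial ℝ)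
    (hPmonic : ∀ n, (P n).Monic)
    (hPdeg : ∀ n, (P n).natDegree = n)
    (h : ℕ → ℝ) (hpos : ∀ n, 0 < h n)
    (horth : ∀ m n : ℕ,
      (∫ x in (-1:ℝ)..1, (P m).eval x * (P n).eval x * w x)
        = if m = n then h n else 0)
    (b : ℕ → ℝ) (hb0 : b 0 = 0)
    (hrec : ∀ n : ℕ, 1 ≤ n →
      Polynomial.X * P n = P (n + 1) + Polynomial.C (b n) * P (n - 1)) :
    Filter.Tendsto b Filter.atTop (nhds (1/4)) ∧
    Filter.Tendsto (fun n : ℕ => (n:ℝ) ^ 2 * (b n - 1/4)) Filter.atTop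
      (nhds ((1 - 4 * α ^ 2) / 16)) ∧
    Filter.Tendsto
      (fun n : ℕ => (n:ℝ) ^ 3 * (b n - 1/4 - (1 - 4 * α ^ 2) / (16 * (n:ℝ) ^ 2)))
      Filter.atTop
      (nhds ((4 * α ^ 2 - 1) / 8 * (α + β - β / Real.sqrt (1 - k2)))) := by
  obtain ⟨hk0, hk1⟩ := hk2
  have hP0 : P 0 = 1 := (hPmonic 0).natDegree_eq_zero.1 (hPdeg 0)
  have hi : IntervalIntegrable w volume (-1) 1 := by
    by_contra hni
    have := horth 0 0
    simp only [hP0, eval_one, one_mul, if_true] at this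
    rw [intervalIntegral.integral_undef hni] at this
    exact (hpos 0).ne this
  obtain ⟨c, hc, hck⟩ : ∃ c : ℝ, 1 < c ∧ k2 * c ^ 2 = 1 := by
    refine ⟨1 / √k2, ?_, ?_⟩
    · rw [lt_div_iff₀ (Real.sqrt_pos.2 hk0), one_mul, Real.sqrt_lt' one_pos]
      linarith
    · rw [div_pow, Real.sq_sqrt hk0.le]
      field_simp
  obtain ⟨V, hV, hVodd⟩ := exists_endpoint_functional hα hc hck hw hi
  set L := integralFunctional w hi with hL
  set G := integralFunctional _ (intervalIntegrable_div_sub hi hc) with hG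
  have ho : ∀ m n, L (P m * P n) = if m = n then h n else 0 := fun m n => by
    rw [← horth m n]
    simp only [hL, integralFunctional_apply, eval_mul]
  have hr : ∀ n, X * P (n + 1) = P (n + 2) + C (b (n + 1)) * P n :=
    fun n => hrec (n + 1) n.succ_pos
  have hGS : ∀ g, G ((C c - X) * g) = 1 * L g := integralFunctional_div_sub hc
  have hw0 : ∀ x ∈ Set.Icc (-1 : ℝ) 1, 0 ≤ w x := fun x hx => by
    have hx2 : x ^ 2 ≤ 1 := by nlinarith [hx.1, hx.2]
    rw [hw]
    exact mul_nonneg (Real.rpow_nonneg (by linarith) _) (Real.rpow_nonneg (by nlinarith) _)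
  have hGsq : ∀ g, 0 ≤ G (g * g) := fun g =>
    intervalIntegral.integral_nonneg (by norm_num) fun x hx => by
      rw [eval_mul]
      exact mul_nonneg (mul_self_nonneg _) (div_nonneg (hw0 x hx) (by linarith [hx.2]))
  have hGle : ∀ g, (c - 1) * G (g * g) ≤ L (g * g) := fun g => by
    rw [← smul_eq_mul, ← map_smul]
    refine integralFunctional_mono fun x hx => ?_
    have hcx : 0 < c - x := by linarith [hx.2]
    rw [eval_smul, eval_mul, smul_eq_mul, mul_div_assoc', div_le_iff₀ hcx]
    have := mul_nonneg (mul_self_nonneg (g.eval x)) (hw0 x hx)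
    nlinarith [hx.2]
  set y : ℕ → ℝ := fun n => G (P (n + 1) * P n) / h n with hy
  have hGy : ∀ n, G (P (n + 1) * P n) = h n * y n := fun n =>
    (mul_div_cancel₀ _ (hpos n).ne').symm
  have hy0 : ∀ n, 0 ≤ y n := fun n =>
    div_nonneg (stieltjes_nonneg hPmonic hPdeg hpos ho hGS hGsq n) (hpos n).le
  have hyK : ∀ n, y n ≤ c / (c - 1) := fun n => by
    have e := (stieltjes_normalized hPmonic hPdeg hpos ho hr hGS hGy n).1
    have e2 := hGle (P (n + 1))
    rw [ho, if_pos rfl] at e2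
    have hc1 : 0 < c - 1 := by linarith
    rw [le_div_iff₀ hc1]
    have e3 : h (n + 1) * ((c - 1) * (y (n + 1) + y n + 1)) ≤ h (n + 1) * c := by
      nlinarith
    have e4 := le_of_mul_le_mul_left e3 (hpos _)
    nlinarith [hy0 (n + 1)]
  have hLX : L X = 0 := by
    have := integralFunctional_comp_neg (hu := hi) (hw := hi)
      (fun x => by rw [hw, hw, neg_sq]) X
    rw [X_comp, map_neg] at this
    linarith
  have hVy : ∀ n, V (P (n + 1) * P n) = h n * ((n : ℝ) + 1 - 2 * β * y n) := fun n => by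
    rw [hVodd, functional_derivative_mul hPmonic hPdeg ho n, hGy]
    · ring
    · have hpar := comp_neg_X_eq hPmonic hPdeg ho hLX (hpos 0).ne' hr
      rw [mul_comp, hpar, hpar]
      have : ((-1 : ℝ[X]) ^ n) * (-1) ^ n = 1 := by rw [← mul_pow]; simp
      linear_combination (-(P (n + 1) * P n)) * this
  have key := tendsto_of_difference_system (α := α) (β := β) hk0 hk1 (b := fun n => b (n + 2))
    hy0 hyK
    (fun n => by
      have e := (stieltjes_normalized hPmonic hPdeg hpos ho hr hGS hGy n).2
      linear_combination k2 * e - (y (n + 1) * (y (n + 1) + 1)) * hck)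
    (fun n => by
      have e := (stieltjes_normalized hPmonic hPdeg hpos ho hr hV hVy n).2
      push_cast at e
      linear_combination e)
  refine ⟨(tendsto_add_atTop_iff_nat 2).1 key.1, (tendsto_add_atTop_iff_nat 2).1 ?_,
    (tendsto_add_atTop_iff_nat 2).1 ?_⟩
  · simpa using key.2.1
  · simpa using key.2.2
end
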